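/- Let s > 0 with s ∉ ℕ, and write s = k + σ with k ∈ ℕ and σ ∈ (0,1). In the Banach space C^s(ℍ) there exists a dense open (hence generic) subset R such that for every f ∈ R and every x₀ ∈ ℝ³, the pointwise Hölder exponent of f at x₀ equals s: h_f(x₀) = s. In particular, generic functions in C^s(ℍ) are monofractal. -/

import Mathlib

noncomputable section

open MeasureTheory

/-- The underlying space of the Heisenberg group: `ℝ³`. -/
abbrev H3 : Type := ℝ × ℝ × ℝ

/-- The Heisenberg group law `(p,q,r)∗(p',q',r') = (p+p', q+q', r+r'+2(qp'−pq'))`. -/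
def Hmul (x y : H3) : H3 :=
  (x.1 + y.1, x.2.1 + y.2.1, x.2.2 + y.2.2 + 2 * (x.2.1 * y.1 - x.1 * y.2.1))

/-- The inverse for the Heisenberg group law. -/
def Hinv (x : H3) : H3 := (-x.1, -x.2.1, -x.2.2)

/-- The homogeneous (gauge) norm `‖(p,q,r)‖ = ((p²+q²)²+r²)^(1/4)`. -/
def Hnorm (x : H3) : ℝ := ((x.1 ^ 2 + x.2.1 ^ 2) ^ 2 + x.2.2 ^ 2) ^ ((1 : ℝ) / 4)

/-- The gauge distance `δ(x,y) = ‖x⁻¹∗y‖`. -/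
def Hdist (x y : H3) : ℝ := Hnorm (Hmul (Hinv x) y)

/-- The gauge ball `B(x,r)`. -/
def Hball (x : H3) (r : ℝ) : Set H3 := {y | Hdist x y < r}

/-- The dilation `λ∘(p,q,r) = (λp, λq, λ²r)`. -/
def Hdil (l : ℝ) (x : H3) : H3 := (l * x.1, l * x.2.1, l ^ 2 * x.2.2)

/-- A lattice point of `ℤ³` seen inside `ℝ³`. -/
def latticePt (k : ℤ × ℤ × ℤ) : H3 := ((k.1 : ℝ), (k.2.1 : ℝ), (k.2.2 : ℝ))

/-- The dyadic point `x_{j,k} = 2^{−j}∘k`. -/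
def xjk (j : ℤ) (k : ℤ × ℤ × ℤ) : H3 := Hdil ((2 : ℝ) ^ (-j)) (latticePt k)

/-- The coordinates of a point of `ℝ³` as a function `Fin 3 → ℝ`. -/
def coords (x : H3) : Fin 3 → ℝ := ![x.1, x.2.1, x.2.2]

/-- Evaluation of a polynomial on `ℝ³` at a point. -/
def evalP (P : MvPolynomial (Fin 3) ℝ) (x : H3) : ℝ := MvPolynomial.eval (coords x) P

/-- The Heisenberg weights of the coordinates `(p,q,r)`: `ω(p)=ω(q)=1`, `ω(r)=2`. -/
def wH : Fin 3 → ℕ := ![1, 1, 2]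

/-- The homogeneous degree `deg_ℍ` of a polynomial on the Heisenberg group:
the monomial `p^a q^b r^c` has weight `a+b+2c`. -/
def hdeg (P : MvPolynomial (Fin 3) ℝ) : ℕ := MvPolynomial.weightedTotalDegree wH P

/-- The horizontal (resp. vertical) vector at `x`: `X = (1,0,2q)`, `Y = (0,1,−2p)`,
`Z = (0,0,1)`. -/
def hvec (i : Fin 3) (x : H3) : H3 :=
  if i = 0 then (1, 0, 2 * x.2.1) else if i = 1 then (0, 1, -2 * x.1) else (0, 0, 1)

/-- The derivative of `f` along the vector field `V₁ = X`, `V₂ = Y` or `V₃ = Z`. -/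
def lDeriv (i : Fin 3) (f : H3 → ℝ) (x : H3) : ℝ := lineDeriv ℝ f x (hvec i x)

/-- The iterated derivative `∇^α f = V_{α₁}⋯V_{α_m} f` along a word `α`. -/
def wordLDeriv : List (Fin 3) → (H3 → ℝ) → H3 → ℝ
  | [] => fun f => f
  | i :: t => fun f => lDeriv i (wordLDeriv t f)

/-- The weighted order `|α| = Σᵢ ω(αᵢ)` of a word, with `ω(1)=ω(2)=1`, `ω(3)=2`. -/
def wordWeight (α : List (Fin 3)) : ℕ :=
  (α.map fun i => if i = (2 : Fin 3) then 2 else 1).sum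

/-- Membership in the global Hölder space `C^s(ℍ)`, `s = k + σ`: all iterated horizontal
derivatives `∇^α f` with `|α| ≤ k` exist (each differentiation step exists everywhere),
are continuous and bounded, and the top-order ones are uniformly `σ`-Hölder for the gauge
distance. -/
def MemCs (k : ℕ) (σ : ℝ) (f : H3 → ℝ) : Prop :=
  (∀ (α : List (Fin 3)) (i : Fin 3), wordWeight (i :: α) ≤ k →
      ∀ x : H3, LineDifferentiableAt ℝ (wordLDeriv α f) x (hvec i x)) ∧
  (∀ α : List (Fin 3), wordWeight α ≤ k →
      Continuous (wordLDeriv α f) ∧ ∃ M : ℝ, ∀ x : H3, |wordLDeriv α f x| ≤ M) ∧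
  (∃ M : ℝ, ∀ α : List (Fin 3), wordWeight α = k → ∀ x y : H3,
      |wordLDeriv α f x - wordLDeriv α f y| ≤ M * Hdist x y ^ σ)

/-- The sup norm `‖∇^α f‖_∞` (as a real supremum). -/
def supDeriv (α : List (Fin 3)) (f : H3 → ℝ) : ℝ :=
  sSup (Set.range fun x => |wordLDeriv α f x|)

/-- The Hölder seminorm `sup_{|α|=k} sup_{x≠y} |∇^α f(x) − ∇^α f(y)|/δ(x,y)^σ`. -/
def holderSemi (k : ℕ) (σ : ℝ) (f : H3 → ℝ) : ℝ :=
  sSup {w : ℝ | ∃ (α : List (Fin 3)) (x y : H3),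
    wordWeight α = k ∧ x ≠ y ∧
    w = |wordLDeriv α f x - wordLDeriv α f y| / Hdist x y ^ σ}

/-- The Banach norm `‖f‖_{C^s} = Σ_{|α|≤k} ‖∇^α f‖_∞ + Hölder seminorm`, the (finite) sum
running over all words of weighted order at most `k`. -/
def CsNorm (k : ℕ) (σ : ℝ) (f : H3 → ℝ) : ℝ :=
  (∑ n ∈ Finset.range (k + 1), ∑ v : Fin n → Fin 3,
    if wordWeight (List.ofFn v) ≤ k then supDeriv (List.ofFn v) f else 0) +
  holderSemi k σ f

/-- The pointwise Hölder class `C^t(x₀)`: there are `C > 0`, `η > 0` and a polynomial `P`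
with homogeneous degree `< t` such that `|f(x₀∗x) − P(x)| ≤ C‖x‖^t` whenever `‖x‖ < η`. -/
def MemCsAt (t : ℝ) (x₀ : H3) (f : H3 → ℝ) : Prop :=
  ∃ C : ℝ, 0 < C ∧ ∃ η : ℝ, 0 < η ∧ ∃ P : MvPolynomial (Fin 3) ℝ, (hdeg P : ℝ) < t ∧
    ∀ x : H3, Hnorm x < η → |f (Hmul x₀ x) - evalP P x| ≤ C * Hnorm x ^ t

/-- The pointwise Hölder exponent `h_f(x₀) = sup{t > 0 : f ∈ C^t(x₀)}` (equal to `0` when the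
set is empty, by the convention `sSup ∅ = 0`). -/
def holderExponent (f : H3 → ℝ) (x₀ : H3) : ℝ :=
  sSup {t : ℝ | 0 < t ∧ MemCsAt t x₀ f}

/-- The one-parameter subgroup generated by the `i`-th vector field. -/
def Hexp (i : Fin 3) (t : ℝ) : H3 :=
  if i = 0 then (t, 0, 0) else if i = 1 then (0, t, 0) else (0, 0, t)

lemma Hexp_zero' (t : ℝ) : Hexp 0 t = (t, 0, 0) := rfl

lemma Hexp_one' (t : ℝ) : Hexp 1 t = (0, t, 0) := rfl

lemma Hexp_two' (t : ℝ) : Hexp 2 t = (0, 0, t) := rfl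

lemma Hmul_assoc' (x y z : H3) : Hmul (Hmul x y) z = Hmul x (Hmul y z) := by
  simp only [Hmul, Prod.mk.injEq]
  refine ⟨by ring, by ring, by ring⟩

lemma Hinv_Hmul_cancel (x y : H3) : Hmul (Hinv x) (Hmul x y) = y := by
  rcases y with ⟨a, b, c⟩
  simp only [Hmul, Hinv, Prod.mk.injEq]
  refine ⟨by ring, by ring, by ring⟩

lemma Hmul_Hinv_cancel (x y : H3) : Hmul x (Hmul (Hinv x) y) = y := by
  rcases y with ⟨a, b, c⟩
  simp only [Hmul, Hinv, Prod.mk.injEq]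
  refine ⟨by ring, by ring, by ring⟩

lemma Hexp_add (i : Fin 3) (t u : ℝ) : Hmul (Hexp i t) (Hexp i u) = Hexp i (t + u) := by
  fin_cases i <;> simp [Hmul, Hexp]

lemma Hmul_Hexp_zero (i : Fin 3) (x : H3) : Hmul x (Hexp i 0) = x := by
  fin_cases i <;> simp [Hmul, Hexp]

lemma add_smul_hvec (i : Fin 3) (x : H3) (t : ℝ) : x + t • hvec i x = Hmul x (Hexp i t) := by
  rcases x with ⟨a, b, c⟩
  fin_cases i
  · simp [Hmul, Hexp, hvec]; ring
  · simp [Hmul, Hexp, hvec]; ring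
  · simp [Hmul, Hexp, hvec]

lemma Hdist_Hmul_left (x z : H3) : Hdist x (Hmul x z) = Hnorm z := by
  rw [Hdist, Hinv_Hmul_cancel]

/-- `g` is the derivative of `f` along the `i`-th field, everywhere. -/
def HD (i : Fin 3) (f g : H3 → ℝ) : Prop :=
  ∀ x t, HasDerivAt (fun u => f (Hmul x (Hexp i u))) (g (Hmul x (Hexp i t))) t

lemma HD.mk0 {i : Fin 3} {f g : H3 → ℝ}
    (h : ∀ x, HasDerivAt (fun u => f (Hmul x (Hexp i u))) (g x) 0) : HD i f g := by
  intro x t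
  have h1 := h (Hmul x (Hexp i t))
  have h2 : HasDerivAt (fun u : ℝ => u - t) 1 t := (hasDerivAt_id t).sub_const t
  have h3 := HasDerivAt.comp_of_eq t h1 h2 (by simp)
  simp only [mul_one] at h3
  have h4 : (fun u => f (Hmul x (Hexp i u))) =
      (fun u => f (Hmul (Hmul x (Hexp i t)) (Hexp i u))) ∘ fun u => u - t := by
    funext u
    simp only [Function.comp, Hmul_assoc', Hexp_add]
    congr 3
    ring
  rw [h4]
  exact h3

lemma HD.zero {i : Fin 3} {f g : H3 → ℝ} (h : HD i f g) (x : H3) :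
    HasDerivAt (fun u => f (Hmul x (Hexp i u))) (g x) 0 := by
  have := h x 0
  rwa [Hmul_Hexp_zero] at this

lemma HD.lDeriv_eq {i : Fin 3} {f g : H3 → ℝ} (h : HD i f g) : lDeriv i f = g := by
  funext x
  have := (h.zero x).deriv
  rw [← this, lDeriv, lineDeriv]
  simp only [add_smul_hvec]

lemma HD.lineDiff {i : Fin 3} {f g : H3 → ℝ} (h : HD i f g) (x : H3) :
    LineDifferentiableAt ℝ f x (hvec i x) := by
  have := (h.zero x).differentiableAt
  rw [LineDifferentiableAt]
  simpa only [add_smul_hvec] using this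

lemma HD.of_lineDiff {i : Fin 3} {f : H3 → ℝ}
    (h : ∀ x, LineDifferentiableAt ℝ f x (hvec i x)) : HD i f (lDeriv i f) := by
  apply HD.mk0
  intro x
  have := (h x)
  rw [LineDifferentiableAt] at this
  have h2 := this.hasDerivAt
  rw [lDeriv, lineDeriv]
  simpa only [add_smul_hvec] using h2

lemma HD.sub {i : Fin 3} {f g f' g' : H3 → ℝ} (hf : HD i f f') (hg : HD i g g') :
    HD i (fun x => f x - g x) (fun x => f' x - g' x) :=
  fun x t => (hf x t).sub (hg x t)

lemma MemCs.hd {k : ℕ} {σ : ℝ} {f : H3 → ℝ} (hf : MemCs k σ f) (α : List (Fin 3)) (i : Fin 3)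
    (h : wordWeight (i :: α) ≤ k) : HD i (wordLDeriv α f) (wordLDeriv (i :: α) f) :=
  HD.of_lineDiff (hf.1 α i h)

lemma wordWeight_cons (i : Fin 3) (α : List (Fin 3)) :
    wordWeight (i :: α) = (if i = 2 then 2 else 1) + wordWeight α := by
  simp [wordWeight]

lemma wordWeight_rep (i : Fin 3) (n : ℕ) (α : List (Fin 3)) :
    wordWeight (List.replicate n i ++ α) = n * (if i = 2 then 2 else 1) + wordWeight α := by
  simp [wordWeight]

lemma taylor1 (m : ℕ) : ∀ (u : ℕ → ℝ → ℝ)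
    (_ : ∀ j < m, ∀ t, HasDerivAt (u j) (u (j + 1) t) t) (B τ : ℝ) (_ : 0 ≤ τ) (_ : 0 ≤ B)
    (_ : ∀ t, |u m t - u m 0| ≤ B * |t| ^ τ) (t : ℝ),
    |u 0 t - ∑ j ∈ Finset.range (m + 1), u j 0 * t ^ j / (j.factorial : ℝ)| ≤
      B * |t| ^ ((m : ℝ) + τ) := by
  induction m with
  | zero =>
    intro u _ B τ _ _ h t
    simpa using h t
  | succ m ih =>
    intro u hu B τ hτ hB0 hB t
    have ih' := ih (fun j => u (j + 1)) (fun j hj => hu (j + 1) (by omega)) B τ hτ hB0 hB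
    set v : ℝ → ℝ := fun t => u 0 t - ∑ j ∈ Finset.range (m + 1 + 1),
      u j 0 * t ^ j / (j.factorial : ℝ) with hv
    have hder : ∀ t, HasDerivAt v (u 1 t - ∑ j ∈ Finset.range (m + 1),
        u (j + 1) 0 * t ^ j / (j.factorial : ℝ)) t := by
      intro t
      refine (hu 0 (by omega) t).sub ?_
      simp only [Finset.sum_range_succ' _ (m + 1)]
      simp only [pow_zero]
      refine HasDerivAt.add_const _ ?_
      refine HasDerivAt.fun_sum ?_
      intro j _
      have := (((hasDerivAt_id t).pow (j + 1)).const_mul (u (j + 1) 0)).div_const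
        ((j + 1).factorial : ℝ)
      refine this.congr_deriv ?_
      rw [Nat.factorial_succ]
      have h1 : (j.factorial : ℝ) ≠ 0 := by positivity
      have h2 : ((j : ℝ) + 1) ≠ 0 := by positivity
      push_cast
      simp only [id]
      field_simp
    have hv0 : v 0 = 0 := by
      simp [hv, Finset.sum_range_succ']
    have hmv := Convex.norm_image_sub_le_of_norm_hasDerivWithin_le (f := v)
      (C := B * |t| ^ ((m : ℝ) + τ)) (s := Set.uIcc 0 t) (x := 0) (y := t)
      (fun x _ => (hder x).hasDerivWithinAt)
      (by
        intro x hx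
        refine (ih' x).trans ?_
        have : |x| ≤ |t| := by
          have := Set.abs_sub_left_of_mem_uIcc hx
          simpa using this
        gcongr) (convex_uIcc 0 t) (by simp) (by simp)
    rw [hv0] at hmv
    simp only [sub_zero, Real.norm_eq_abs] at hmv
    refine hmv.trans (le_of_eq ?_)
    by_cases ht : t = 0
    · subst ht
      simp only [abs_zero, mul_zero]
      rw [Real.zero_rpow (by positivity), mul_zero]
    · have : 0 < |t| := abs_pos.mpr ht
      rw [mul_assoc, ← Real.rpow_add_one this.ne']
      push_cast
      congr 2; ring

lemma Hnorm_nonneg (x : H3) : 0 ≤ Hnorm x := by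
  unfold Hnorm; positivity

lemma Hnorm_pow4 (x : H3) : Hnorm x ^ 4 = (x.1 ^ 2 + x.2.1 ^ 2) ^ 2 + x.2.2 ^ 2 := by
  unfold Hnorm
  rw [← Real.rpow_natCast, ← Real.rpow_mul (by positivity)]
  norm_num

lemma Hnorm_le {x : H3} {b : ℝ} (hb : 0 ≤ b)
    (h : (x.1 ^ 2 + x.2.1 ^ 2) ^ 2 + x.2.2 ^ 2 ≤ b ^ 4) : Hnorm x ≤ b := by
  rw [← Hnorm_pow4] at h
  exact le_of_pow_le_pow_left₀ (by norm_num) hb h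

lemma abs_fst_le (x : H3) : |x.1| ≤ Hnorm x := by
  have h := Hnorm_pow4 x
  refine le_of_pow_le_pow_left₀ (n := 4) (by norm_num) (Hnorm_nonneg x) ?_
  rw [h, show |x.1| ^ 4 = (|x.1| ^ 2) ^ 2 by ring, sq_abs]
  nlinarith [sq_nonneg x.2.2, mul_nonneg (sq_nonneg x.1) (sq_nonneg x.2.1), sq_nonneg (x.2.1 ^ 2)]

lemma abs_snd_le (x : H3) : |x.2.1| ≤ Hnorm x := by
  have h := Hnorm_pow4 x
  refine le_of_pow_le_pow_left₀ (n := 4) (by norm_num) (Hnorm_nonneg x) ?_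
  rw [h, show |x.2.1| ^ 4 = (|x.2.1| ^ 2) ^ 2 by ring, sq_abs]
  nlinarith [sq_nonneg x.2.2, mul_nonneg (sq_nonneg x.1) (sq_nonneg x.2.1), sq_nonneg (x.1 ^ 2)]

lemma abs_trd_le (x : H3) : |x.2.2| ≤ Hnorm x ^ 2 := by
  have h := Hnorm_pow4 x
  refine le_of_pow_le_pow_left₀ (n := 2) (by norm_num) (by positivity) ?_
  rw [← pow_mul, h, sq_abs]
  nlinarith [sq_nonneg (x.1 ^ 2 + x.2.1 ^ 2)]

lemma Hnorm_le_two {x : H3} {a : ℝ} (h1 : |x.1| ≤ a) (h2 : |x.2.1| ≤ a)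
    (h3 : |x.2.2| ≤ 3 * a ^ 2) : Hnorm x ≤ 2 * a := by
  have ha : 0 ≤ a := (abs_nonneg _).trans h1
  apply Hnorm_le (by positivity)
  have e1 : x.1 ^ 2 ≤ a ^ 2 := sq_le_sq.mpr (by rwa [abs_of_nonneg ha])
  have e2 : x.2.1 ^ 2 ≤ a ^ 2 := sq_le_sq.mpr (by rwa [abs_of_nonneg ha])
  have e3 : x.2.2 ^ 2 ≤ (3 * a ^ 2) ^ 2 := sq_le_sq.mpr (by
    rwa [abs_of_nonneg (by positivity : 0 ≤ 3 * a ^ 2)])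
  have e4 : (x.1 ^ 2 + x.2.1 ^ 2) ^ 2 ≤ (2 * a ^ 2) ^ 2 :=
    pow_le_pow_left₀ (by positivity) (by linarith) 2
  nlinarith [pow_nonneg ha 4]

lemma Hnorm_mul_le (x y : H3) : Hnorm (Hmul x y) ≤ 2 * (Hnorm x + Hnorm y) := by
  have hx := Hnorm_nonneg x
  have hy := Hnorm_nonneg y
  have a1 := abs_fst_le x
  have a2 := abs_snd_le x
  have a3 := abs_trd_le x
  have b1 := abs_fst_le y
  have b2 := abs_snd_le y
  have b3 := abs_trd_le y
  apply Hnorm_le_two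
  · simp only [Hmul]
    exact (abs_add_le _ _).trans (by linarith)
  · simp only [Hmul]
    exact (abs_add_le _ _).trans (by linarith)
  · simp only [Hmul]
    have c1 : |x.2.1 * y.1| ≤ Hnorm x * Hnorm y := by rw [abs_mul]; gcongr
    have c2 : |x.1 * y.2.1| ≤ Hnorm x * Hnorm y := by rw [abs_mul]; gcongr
    rw [abs_le] at *
    constructor <;> nlinarith [mul_nonneg hx hy]

lemma Hnorm_exp (i : Fin 3) (hi : i ≠ 2) (t : ℝ) : Hnorm (Hexp i t) = |t| := by
  have h0 : (0:ℝ) ≤ |t| := abs_nonneg t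
  have : Hnorm (Hexp i t) ^ 4 = |t| ^ 4 := by
    rw [Hnorm_pow4, show |t| ^ 4 = (|t| ^ 2) ^ 2 by ring, sq_abs]
    fin_cases i
    · simp [Hexp]
    · simp [Hexp]
    · simp at hi
  exact (pow_left_inj₀ (Hnorm_nonneg _) h0 (by norm_num)).mp this

lemma Hnorm_exp2 (t : ℝ) : Hnorm (Hexp 2 t) = |t| ^ ((1:ℝ) / 2) := by
  have h0 : (0:ℝ) ≤ |t| := abs_nonneg t
  have : Hnorm (Hexp 2 t) ^ 4 = (|t| ^ ((1:ℝ) / 2)) ^ 4 := by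
    rw [Hnorm_pow4, ← Real.rpow_natCast (|t| ^ ((1:ℝ) / 2)), ← Real.rpow_mul h0]
    norm_num [Hexp_two']
  exact (pow_left_inj₀ (Hnorm_nonneg _) (by positivity) (by norm_num)).mp this

lemma hdeg_le_iff (P : MvPolynomial (Fin 3) ℝ) (n : ℕ) :
    hdeg P ≤ n ↔ ∀ d ∈ P.support, Finsupp.weight wH d ≤ n := by
  unfold hdeg MvPolynomial.weightedTotalDegree
  exact Finset.sup_le_iff

/-- `F` is a polynomial function of homogeneous degree at most `n`. -/
def PolyLE (n : ℕ) (F : H3 → ℝ) : Prop :=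
  ∃ P : MvPolynomial (Fin 3) ℝ, hdeg P ≤ n ∧ ∀ x, F x = evalP P x

lemma PolyLE.mono {n m : ℕ} {F : H3 → ℝ} (h : PolyLE n F) (hnm : n ≤ m) : PolyLE m F := by
  obtain ⟨P, hP, h⟩ := h
  exact ⟨P, hP.trans hnm, h⟩

lemma PolyLE.const (c : ℝ) : PolyLE 0 (fun _ => c) := by
  classical
  refine ⟨MvPolynomial.C c, ?_, by simp [evalP]⟩
  rw [hdeg_le_iff]
  intro d hd
  rw [MvPolynomial.mem_support_iff, MvPolynomial.coeff_C] at hd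
  have : d = 0 := by
    by_contra h
    exact hd (if_neg (Ne.symm h))
  simp [this]

lemma PolyLE.add {n : ℕ} {F G : H3 → ℝ} (hF : PolyLE n F) (hG : PolyLE n G) :
    PolyLE n (fun x => F x + G x) := by
  classical
  obtain ⟨P, hP, hP'⟩ := hF
  obtain ⟨Q, hQ, hQ'⟩ := hG
  refine ⟨P + Q, ?_, by simp [evalP, hP', hQ']⟩
  rw [hdeg_le_iff] at *
  intro d hd
  have := MvPolynomial.support_add hd
  rw [Finset.mem_union] at this
  exact this.elim (hP d) (hQ d)

lemma PolyLE.mul {n m : ℕ} {F G : H3 → ℝ} (hF : PolyLE n F) (hG : PolyLE m G) :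
    PolyLE (n + m) (fun x => F x * G x) := by
  classical
  obtain ⟨P, hP, hP'⟩ := hF
  obtain ⟨Q, hQ, hQ'⟩ := hG
  refine ⟨P * Q, ?_, by simp [evalP, hP', hQ']⟩
  rw [hdeg_le_iff] at *
  intro d hd
  have := MvPolynomial.support_mul _ _ hd
  rw [Finset.mem_add] at this
  obtain ⟨a, ha, b, hb, rfl⟩ := this
  rw [map_add]
  exact add_le_add (hP a ha) (hQ b hb)

lemma PolyLE.X (i : Fin 3) : PolyLE (wH i) (fun x => coords x i) := by
  classical
  refine ⟨MvPolynomial.X i, ?_, by simp [evalP]⟩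
  rw [hdeg_le_iff]
  intro d hd
  rw [MvPolynomial.support_X, Finset.mem_singleton] at hd
  rw [hd, Finsupp.weight_single]
  simp

lemma PolyLE.pow {n : ℕ} {F : H3 → ℝ} (hF : PolyLE n F) (j : ℕ) :
    PolyLE (j * n) (fun x => F x ^ j) := by
  induction j with
  | zero => simpa using PolyLE.const 1
  | succ j ih =>
    have := ih.mul hF
    simpa [pow_succ, add_mul] using this

/-- Approximation by polynomials of degree at most `n` with error `O(‖x‖^(n+σ))`. -/
def Approx (σ : ℝ) (n : ℕ) (F : H3 → ℝ) : Prop :=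
  ∃ G : H3 → ℝ, PolyLE n G ∧ ∃ C : ℝ, 0 ≤ C ∧
    ∀ x, |F x - G x| ≤ C * Hnorm x ^ ((n : ℝ) + σ)

lemma Approx.of_poly {σ : ℝ} {n : ℕ} {F : H3 → ℝ} (h : PolyLE n F) : Approx σ n F :=
  ⟨F, h, 0, le_rfl, fun x => by simp⟩

lemma Approx.add {σ : ℝ} {n : ℕ} {F F' : H3 → ℝ} (h : Approx σ n F) (h' : Approx σ n F') :
    Approx σ n (fun x => F x + F' x) := by
  obtain ⟨G, hG, C, hC, hb⟩ := h
  obtain ⟨G', hG', C', hC', hb'⟩ := h'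
  refine ⟨_, hG.add hG', C + C', by positivity, fun x => ?_⟩
  have := abs_add_le (F x - G x) (F' x - G' x)
  rw [show F x + F' x - (G x + G' x) = F x - G x + (F' x - G' x) by ring, add_mul]
  linarith [hb x, hb' x]

lemma Approx.sum {σ : ℝ} {n : ℕ} (s : Finset ℕ) (F : ℕ → H3 → ℝ)
    (h : ∀ i ∈ s, Approx σ n (F i)) : Approx σ n (fun x => ∑ i ∈ s, F i x) := by
  classical
  induction s using Finset.induction_on with
  | empty => simpa using Approx.of_poly ((PolyLE.const 0).mono (Nat.zero_le n))
  | insert a s ha ih =>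
    simp only [Finset.sum_insert ha]
    exact (h a (Finset.mem_insert_self _ _)).add
      (ih fun i hi => h i (Finset.mem_insert_of_mem hi))

lemma Approx.of_close {σ : ℝ} {n : ℕ} {F F' : H3 → ℝ} (h : Approx σ n F') (C : ℝ) (hC : 0 ≤ C)
    (hc : ∀ x, |F x - F' x| ≤ C * Hnorm x ^ ((n : ℝ) + σ)) : Approx σ n F := by
  obtain ⟨G, hG, C', hC', hb⟩ := h
  refine ⟨G, hG, C + C', by positivity, fun x => ?_⟩
  have := abs_add_le (F x - F' x) (F' x - G x)
  rw [show F x - G x = F x - F' x + (F' x - G x) by ring, add_mul]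
  linarith [hb x, hc x]

lemma Approx.mul_poly {σ : ℝ} (hσ : 0 ≤ σ) {n d m : ℕ} {F Q : H3 → ℝ} (h : Approx σ n F)
    (hQ : PolyLE d Q) (C' : ℝ) (hC' : 0 ≤ C') (hQb : ∀ x, |Q x| ≤ C' * Hnorm x ^ d)
    (hm : m = n + d) :
    Approx σ m (fun x => F x * Q x) := by
  subst hm
  obtain ⟨G, hG, C, hC, hb⟩ := h
  refine ⟨_, hG.mul hQ, C * C', by positivity, fun x => ?_⟩
  have hN := Hnorm_nonneg x
  rw [← sub_mul, abs_mul]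
  calc |F x - G x| * |Q x| ≤ (C * Hnorm x ^ ((n : ℝ) + σ)) * (C' * Hnorm x ^ d) := by
        gcongr
        · exact hb x
        · exact hQb x
    _ = C * C' * (Hnorm x ^ ((n : ℝ) + σ) * Hnorm x ^ (d : ℝ)) := by
        rw [Real.rpow_natCast]; ring
    _ = _ := by
        rw [← Real.rpow_add_of_nonneg hN (by positivity) (by positivity)]
        congr 2
        push_cast; ring

lemma MemCs.taylor {k : ℕ} {σ : ℝ} {f : H3 → ℝ} (hf : MemCs k σ f) (i : Fin 3)
    (α : List (Fin 3)) (m : ℕ) (hw : wordWeight (List.replicate m i ++ α) ≤ k)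
    (B τ : ℝ) (hτ : 0 ≤ τ) (hB0 : 0 ≤ B)
    (hB : ∀ y t, |wordLDeriv (List.replicate m i ++ α) f (Hmul y (Hexp i t)) -
      wordLDeriv (List.replicate m i ++ α) f y| ≤ B * |t| ^ τ) (y : H3) (t : ℝ) :
    |wordLDeriv α f (Hmul y (Hexp i t)) - ∑ j ∈ Finset.range (m + 1),
      wordLDeriv (List.replicate j i ++ α) f y * t ^ j / (j.factorial : ℝ)| ≤
      B * |t| ^ ((m : ℝ) + τ) := by
  have := taylor1 m (fun j u => wordLDeriv (List.replicate j i ++ α) f (Hmul y (Hexp i u)))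
    (by
      intro j hj u
      have := hf.hd (List.replicate j i ++ α) i (by
        refine le_trans ?_ hw
        rw [wordWeight_cons, wordWeight_rep, wordWeight_rep]
        have : (j + 1) * (if i = 2 then 2 else 1) ≤ m * (if i = 2 then 2 else 1) :=
          Nat.mul_le_mul_right _ hj
        linarith)
      exact this y u) B τ hτ hB0
    (by
      intro u
      simp only [Hmul_Hexp_zero]
      exact hB y u) t
  simpa only [Hmul_Hexp_zero, List.replicate_zero, List.nil_append] using this

lemma MemCs.holder {k : ℕ} {σ : ℝ} {f : H3 → ℝ} (hf : MemCs k σ f) :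
    ∃ M : ℝ, 0 ≤ M ∧ ∀ α : List (Fin 3), wordWeight α = k → ∀ x z : H3,
      |wordLDeriv α f (Hmul x z) - wordLDeriv α f x| ≤ M * Hnorm z ^ σ := by
  obtain ⟨M, hM⟩ := hf.2.2
  refine ⟨|M|, abs_nonneg _, fun α hα x z => ?_⟩
  have h := hM α hα x (Hmul x z)
  rw [Hdist_Hmul_left] at h
  rw [abs_sub_comm]
  refine h.trans ?_
  have := Real.rpow_nonneg (Hnorm_nonneg z) σ
  gcongr
  exact le_abs_self M

/-- Commutator estimate in the vertical direction. -/
lemma vertical_est {σ : ℝ} (hσ0 : 0 < σ) {h hX hY : H3 → ℝ} (dX : HD 0 h hX) (dY : HD 1 h hY)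
    {M : ℝ} (hM : 0 ≤ M) (bX : ∀ x z, |hX (Hmul x z) - hX x| ≤ M * Hnorm z ^ σ)
    (bY : ∀ x z, |hY (Hmul x z) - hY x| ≤ M * Hnorm z ^ σ) (y : H3) (a b c : ℝ)
    (ha : |a| ≤ c) (hb : |b| ≤ c) :
    |h (Hmul y (Hexp 2 (-4 * a * b))) - h y| ≤ 8 * M * (2 * c) ^ (1 + σ) := by
  have hc : 0 ≤ c := (abs_nonneg _).trans ha
  have tX : ∀ y t, |t| ≤ c → |h (Hmul y (Hexp 0 t)) - (h y + hX y * t)| ≤ M * c ^ (1 + σ) := by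
    intro y t ht
    have := taylor1 1 (fun j u => if j = 0 then h (Hmul y (Hexp 0 u)) else hX (Hmul y (Hexp 0 u)))
      (by
        intro j hj u
        obtain rfl : j = 0 := by omega
        simpa using dX y u) M σ hσ0.le hM
      (by
        intro u
        have := bX y (Hexp 0 u)
        rw [Hnorm_exp 0 (by decide)] at this
        simpa [Hmul_Hexp_zero] using this) t
    simp [Finset.sum_range_succ, Hmul_Hexp_zero] at this
    refine this.trans ?_
    gcongr
  have tY : ∀ y t, |t| ≤ c → |h (Hmul y (Hexp 1 t)) - (h y + hY y * t)| ≤ M * c ^ (1 + σ) := by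
    intro y t ht
    have := taylor1 1 (fun j u => if j = 0 then h (Hmul y (Hexp 1 u)) else hY (Hmul y (Hexp 1 u)))
      (by
        intro j hj u
        obtain rfl : j = 0 := by omega
        simpa using dY y u) M σ hσ0.le hM
      (by
        intro u
        have := bY y (Hexp 1 u)
        rw [Hnorm_exp 1 (by decide)] at this
        simpa [Hmul_Hexp_zero] using this) t
    simp [Finset.sum_range_succ, Hmul_Hexp_zero] at this
    refine this.trans ?_
    gcongr
  have e1 := tX y a ha
  have e2 := tY (Hmul y (Hexp 0 a)) b hb
  have e3 := tX (Hmul (Hmul y (Hexp 0 a)) (Hexp 1 b)) (-a) (by rwa [abs_neg])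
  have e4 := tY (Hmul (Hmul (Hmul y (Hexp 0 a)) (Hexp 1 b)) (Hexp 0 (-a))) (-b)
    (by rwa [abs_neg])
  have efin : Hmul (Hmul (Hmul (Hmul y (Hexp 0 a)) (Hexp 1 b)) (Hexp 0 (-a))) (Hexp 1 (-b)) =
      Hmul y (Hexp 2 (-4 * a * b)) := by
    simp only [Hexp_zero', Hexp_one', Hexp_two', Hmul, Prod.mk.injEq]
    refine ⟨by ring, by ring, by ring⟩
  rw [efin] at e4
  have hab : |a * b| ≤ c ^ 2 := by
    rw [abs_mul, sq]; gcongr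
  have n1 : Hnorm (Hmul (Hexp 0 a) (Hexp 1 b)) ≤ 2 * c := by
    apply Hnorm_le_two
    · simpa [Hexp_zero', Hexp_one', Hmul] using ha
    · simpa [Hexp_zero', Hexp_one', Hmul] using hb
    · simp only [Hexp_zero', Hexp_one', Hmul]
      rw [abs_le] at *
      constructor <;> nlinarith
  have n2 : Hnorm (Hmul (Hexp 1 b) (Hexp 0 (-a))) ≤ 2 * c := by
    apply Hnorm_le_two
    · simpa [Hexp_zero', Hexp_one', Hmul] using ha
    · simpa [Hexp_zero', Hexp_one', Hmul] using hb
    · simp only [Hexp_zero', Hexp_one', Hmul]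
      rw [abs_le] at *
      constructor <;> nlinarith
  have d1 := bX y (Hmul (Hexp 0 a) (Hexp 1 b))
  have d2 := bY (Hmul y (Hexp 0 a)) (Hmul (Hexp 1 b) (Hexp 0 (-a)))
  rw [← Hmul_assoc'] at d1 d2
  have hcs : c ^ (1 + σ) ≤ (2 * c) ^ (1 + σ) := by
    gcongr; linarith
  have hcm : c * (2 * c) ^ σ ≤ (2 * c) ^ (1 + σ) := by
    rw [Real.rpow_add_of_nonneg (by positivity) (by norm_num) hσ0.le, Real.rpow_one]
    gcongr; linarith
  have f1 : |a * (hX (Hmul (Hmul y (Hexp 0 a)) (Hexp 1 b)) - hX y)| ≤ M * (2 * c) ^ (1 + σ) := by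
    rw [abs_mul]
    calc _ ≤ c * (M * (2 * c) ^ σ) := by
          have := d1.trans (mul_le_mul_of_nonneg_left
            (Real.rpow_le_rpow (Hnorm_nonneg _) n1 hσ0.le) hM)
          gcongr
      _ = M * (c * (2 * c) ^ σ) := by ring
      _ ≤ _ := by gcongr
  have f2 : |b * (hY (Hmul (Hmul (Hmul y (Hexp 0 a)) (Hexp 1 b)) (Hexp 0 (-a)))
      - hY (Hmul y (Hexp 0 a)))| ≤ M * (2 * c) ^ (1 + σ) := by
    rw [abs_mul]
    calc _ ≤ c * (M * (2 * c) ^ σ) := by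
          have := d2.trans (mul_le_mul_of_nonneg_left
            (Real.rpow_le_rpow (Hnorm_nonneg _) n2 hσ0.le) hM)
          gcongr
      _ = M * (c * (2 * c) ^ σ) := by ring
      _ ≤ _ := by gcongr
  have hcs' := mul_le_mul_of_nonneg_left hcs hM
  have hpos : 0 ≤ M * (2 * c) ^ (1 + σ) := by positivity
  rw [abs_le] at *
  constructor <;> nlinarith

lemma MemCs.vertical {k : ℕ} {σ : ℝ} (hσ0 : 0 < σ) {f : H3 → ℝ} (hf : MemCs k σ f)
    (m : ℕ) (hm : m = k / 2) :
    ∃ B : ℝ, 0 ≤ B ∧ ∀ y t, |wordLDeriv (List.replicate m 2 ++ []) f (Hmul y (Hexp 2 t)) -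
      wordLDeriv (List.replicate m 2 ++ []) f y| ≤ B * |t| ^ (((k : ℝ) - 2 * m + σ) / 2) := by
  obtain ⟨M, hM0, hM⟩ := hf.holder
  rcases Nat.even_or_odd k with he | ho
  · have hk : k = 2 * m := by subst hm; exact (Nat.two_mul_div_two_of_even he).symm
    refine ⟨M, hM0, fun y t => ?_⟩
    have := hM (List.replicate m 2 ++ []) (by simp [wordWeight]; omega) y (Hexp 2 t)
    rw [Hnorm_exp2, ← Real.rpow_mul (abs_nonneg t)] at this
    refine this.trans (le_of_eq ?_)
    congr 2
    rw [hk]; push_cast; ring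
  · have hk : k = 2 * m + 1 := by subst hm; obtain ⟨j, rfl⟩ := ho; omega
    have w0 : wordWeight (0 :: (List.replicate m 2 ++ [])) = k := by
      rw [wordWeight_cons, wordWeight_rep]; simp [wordWeight]; omega
    have w1 : wordWeight (1 :: (List.replicate m 2 ++ [])) = k := by
      rw [wordWeight_cons, wordWeight_rep]; simp [wordWeight]; omega
    refine ⟨8 * M, by positivity, fun y t => ?_⟩
    have key := fun a b c ha hb => vertical_est hσ0 (hf.hd _ 0 w0.le) (hf.hd _ 1 w1.le) hM0
      (hM _ w0) (hM _ w1) y a b c ha hb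
    set c := Real.sqrt |t| / 2 with hc
    have hc0 : 0 ≤ c := by positivity
    have hcc : 4 * c * c = |t| := by
      have := Real.mul_self_sqrt (abs_nonneg t)
      rw [hc]; nlinarith
    have hexp : (2 * c) ^ (1 + σ) = |t| ^ (((k : ℝ) - 2 * m + σ) / 2) := by
      rw [hc, mul_div_cancel₀ _ (two_ne_zero), Real.sqrt_eq_rpow, ← Real.rpow_mul (abs_nonneg t)]
      congr 1
      rw [hk]; push_cast; ring
    rw [← hexp]
    rcases le_total 0 t with ht | ht
    · have := key (-c) c c (by rw [abs_neg, abs_of_nonneg hc0]) (by rw [abs_of_nonneg hc0])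
      rw [show -4 * -c * c = t by rw [abs_of_nonneg ht] at hcc; linarith] at this
      exact this
    · have := key c c c (by rw [abs_of_nonneg hc0]) (by rw [abs_of_nonneg hc0])
      rw [show -4 * c * c = t by rw [abs_of_nonpos ht] at hcc; linarith] at this
      exact this

lemma MemCs.approxX {k : ℕ} {σ : ℝ} (hσ0 : 0 < σ) {f : H3 → ℝ} (hf : MemCs k σ f) (x₀ : H3)
    (β : List (Fin 3)) (n : ℕ) (hn : n + wordWeight β = k) :
    Approx σ n (fun x => wordLDeriv β f (Hmul x₀ (Hexp 0 x.1))) := by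
  obtain ⟨M, hM0, hM⟩ := hf.holder
  have hw : wordWeight (List.replicate n 0 ++ β) = k := by
    rw [wordWeight_rep]; simp; exact hn
  refine Approx.of_close (F' := fun x => ∑ j ∈ Finset.range (n + 1),
      wordLDeriv (List.replicate j 0 ++ β) f x₀ * x.1 ^ j / (j.factorial : ℝ)) ?_ M hM0 ?_
  · apply Approx.sum
    intro j hj
    have hj' : j ≤ n := by simpa [Nat.lt_succ_iff] using hj
    apply Approx.of_poly
    have h1 := (PolyLE.const (wordLDeriv (List.replicate j 0 ++ β) f x₀ / (j.factorial : ℝ))).mul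
      ((PolyLE.X 0).pow j)
    refine PolyLE.mono (n := 0 + j * 1) ?_ (by omega)
    convert! h1 using 2
    simp [coords]; ring
  · intro x
    have := hf.taylor 0 β n hw.le M σ hσ0.le hM0 (by
      intro y t
      have := hM _ hw y (Hexp 0 t)
      rwa [Hnorm_exp 0 (by decide)] at this) x₀ x.1
    refine this.trans ?_
    gcongr
    exact abs_fst_le x

lemma MemCs.approxY {k : ℕ} {σ : ℝ} (hσ0 : 0 < σ) {f : H3 → ℝ} (hf : MemCs k σ f) (x₀ : H3)
    (β : List (Fin 3)) (n : ℕ) (hn : n + wordWeight β = k) :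
    Approx σ n (fun x => wordLDeriv β f (Hmul (Hmul x₀ (Hexp 0 x.1)) (Hexp 1 x.2.1))) := by
  obtain ⟨M, hM0, hM⟩ := hf.holder
  have hw : wordWeight (List.replicate n 1 ++ β) = k := by
    rw [wordWeight_rep]; simp; exact hn
  refine Approx.of_close (F' := fun x => ∑ j ∈ Finset.range (n + 1),
      wordLDeriv (List.replicate j 1 ++ β) f (Hmul x₀ (Hexp 0 x.1)) * x.2.1 ^ j /
        (j.factorial : ℝ)) ?_ M hM0 ?_
  · apply Approx.sum
    intro j hj
    have hj' : j ≤ n := by simpa [Nat.lt_succ_iff] using hj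
    have h0 := hf.approxX hσ0 x₀ (List.replicate j 1 ++ β) (n - j) (by
      rw [wordWeight_rep]; simp; omega)
    have h1 := (PolyLE.const (1 / (j.factorial : ℝ))).mul ((PolyLE.X 1).pow j)
    have h2 := h0.mul_poly hσ0.le (d := j) (m := n) (Q := fun x => 1 / (j.factorial : ℝ) * x.2.1 ^ j)
      (PolyLE.mono h1 (by simp [wH])) (1 / (j.factorial : ℝ)) (by positivity)
      (by
        intro x
        rw [abs_mul, abs_of_nonneg (by positivity), abs_pow]
        gcongr
        exact abs_snd_le x) (by omega)
    convert! h2 using 2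
    ring
  · intro x
    have := hf.taylor 1 β n hw.le M σ hσ0.le hM0 (by
      intro y t
      have := hM _ hw y (Hexp 1 t)
      rwa [Hnorm_exp 1 (by decide)] at this) (Hmul x₀ (Hexp 0 x.1)) x.2.1
    refine this.trans ?_
    gcongr
    exact abs_snd_le x

lemma abs_rho_le (x : H3) : |x.2.2 + 2 * (x.1 * x.2.1)| ≤ 3 * Hnorm x ^ 2 := by
  have a1 := abs_fst_le x
  have a2 := abs_snd_le x
  have a3 := abs_trd_le x
  have hN := Hnorm_nonneg x
  have : |x.1 * x.2.1| ≤ Hnorm x ^ 2 := by rw [abs_mul, sq]; gcongr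
  rw [abs_le] at *
  constructor <;> linarith

lemma MemCs.approx {k : ℕ} {σ : ℝ} (hσ0 : 0 < σ) {f : H3 → ℝ} (hf : MemCs k σ f) (x₀ : H3) :
    Approx σ k (fun x => f (Hmul x₀ x)) := by
  set m := k / 2 with hm
  obtain ⟨B, hB0, hB⟩ := hf.vertical hσ0 m hm
  have hmk : 2 * m ≤ k := by omega
  have hmk' : (2 : ℝ) * m ≤ k := by exact_mod_cast hmk
  have hw : wordWeight (List.replicate m 2 ++ []) ≤ k := by
    rw [wordWeight_rep]; simp [wordWeight]; omega
  have hfac : ∀ x : H3, Hmul x₀ x = Hmul (Hmul (Hmul x₀ (Hexp 0 x.1)) (Hexp 1 x.2.1))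
      (Hexp 2 (x.2.2 + 2 * (x.1 * x.2.1))) := by
    intro x
    simp only [Hexp_zero', Hexp_one', Hexp_two', Hmul, Prod.mk.injEq]
    refine ⟨by ring, by ring, by ring⟩
  refine Approx.of_close (F' := fun x => ∑ j ∈ Finset.range (m + 1),
      wordLDeriv (List.replicate j 2 ++ []) f (Hmul (Hmul x₀ (Hexp 0 x.1)) (Hexp 1 x.2.1)) *
        (x.2.2 + 2 * (x.1 * x.2.1)) ^ j / (j.factorial : ℝ)) ?_
        (B * 3 ^ (((k : ℝ) + σ) / 2)) (by positivity) ?_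
  · apply Approx.sum
    intro j hj
    have hj' : j ≤ m := by simpa [Nat.lt_succ_iff] using hj
    have h0 := hf.approxY hσ0 x₀ (List.replicate j 2 ++ []) (k - 2 * j) (by
      rw [wordWeight_rep]; simp [wordWeight]; omega)
    have hr : PolyLE 2 (fun x : H3 => x.2.2 + 2 * (x.1 * x.2.1)) :=
      (PolyLE.X 2).add (PolyLE.mono ((PolyLE.const 2).mul ((PolyLE.X 0).mul (PolyLE.X 1)))
        (by simp [wH]))
    have h1 := (PolyLE.const (1 / (j.factorial : ℝ))).mul (hr.pow j)
    have h2 := h0.mul_poly hσ0.le (d := 2 * j) (m := k)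
      (Q := fun x => 1 / (j.factorial : ℝ) * (x.2.2 + 2 * (x.1 * x.2.1)) ^ j)
      (PolyLE.mono h1 (by omega)) (1 / (j.factorial : ℝ) * 3 ^ j) (by positivity)
      (by
        intro x
        rw [abs_mul, abs_of_nonneg (by positivity), abs_pow, mul_assoc]
        have := pow_le_pow_left₀ (abs_nonneg _) (abs_rho_le x) j
        rw [mul_pow, ← pow_mul] at this
        gcongr) (by omega)
    convert! h2 using 2
    ring
  · intro x
    have := hf.taylor 2 [] m hw B (((k : ℝ) - 2 * m + σ) / 2) (by linarith) hB0 hB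
      (Hmul (Hmul x₀ (Hexp 0 x.1)) (Hexp 1 x.2.1)) (x.2.2 + 2 * (x.1 * x.2.1))
    rw [← hfac] at this
    refine this.trans ?_
    rw [show (m : ℝ) + ((k : ℝ) - 2 * m + σ) / 2 = ((k : ℝ) + σ) / 2 by ring, mul_assoc]
    have hN := Hnorm_nonneg x
    have h3 : Hnorm x ^ ((k : ℝ) + σ) = (Hnorm x ^ 2) ^ (((k : ℝ) + σ) / 2) := by
      rw [← Real.rpow_natCast, ← Real.rpow_mul hN]
      congr 1; push_cast; ring
    rw [h3, ← Real.mul_rpow (by norm_num) (by positivity)]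
    have := abs_rho_le x
    gcongr

lemma MemCs.memCsAt {k : ℕ} {σ : ℝ} (hσ0 : 0 < σ) {f : H3 → ℝ} (hf : MemCs k σ f) (x₀ : H3) :
    MemCsAt ((k : ℝ) + σ) x₀ f := by
  obtain ⟨G, ⟨P, hP, hGP⟩, C, hC, h⟩ := hf.approx hσ0 x₀
  refine ⟨C + 1, by positivity, 1, one_pos, P, ?_, fun x _ => ?_⟩
  · have : (hdeg P : ℝ) ≤ k := by exact_mod_cast hP
    linarith
  · rw [← hGP]
    refine (h x).trans ?_
    have := Real.rpow_nonneg (Hnorm_nonneg x) ((k : ℝ) + σ)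
    gcongr; linarith

lemma MemCs.wordLDeriv_sub {k : ℕ} {σ : ℝ} {f g : H3 → ℝ} (hf : MemCs k σ f) (hg : MemCs k σ g)
    (α : List (Fin 3)) (hα : wordWeight α ≤ k) :
    wordLDeriv α (fun x => f x - g x) = fun x => wordLDeriv α f x - wordLDeriv α g x := by
  induction α with
  | nil => rfl
  | cons i α ih =>
    have h1 := hα
    rw [wordWeight_cons] at h1
    have h2 := ih (by omega)
    have h3 := ((hf.hd α i hα).sub (hg.hd α i hα)).lDeriv_eq
    rw [← h2] at h3
    exact h3

lemma MemCs.sub {k : ℕ} {σ : ℝ} {f g : H3 → ℝ} (hf : MemCs k σ f) (hg : MemCs k σ g) :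
    MemCs k σ (fun x => f x - g x) := by
  refine ⟨fun α i h x => ?_, fun α h => ?_, ?_⟩
  · have h1 := h
    rw [wordWeight_cons] at h1
    rw [hf.wordLDeriv_sub hg α (by omega)]
    exact ((hf.hd α i h).sub (hg.hd α i h)).lineDiff x
  · rw [hf.wordLDeriv_sub hg α h]
    obtain ⟨c1, M1, h1⟩ := hf.2.1 α h
    obtain ⟨c2, M2, h2⟩ := hg.2.1 α h
    refine ⟨c1.sub c2, M1 + M2, fun x => ?_⟩
    exact (abs_sub _ _).trans (add_le_add (h1 x) (h2 x))
  · obtain ⟨M1, h1⟩ := hf.2.2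
    obtain ⟨M2, h2⟩ := hg.2.2
    refine ⟨M1 + M2, fun α h x y => ?_⟩
    rw [hf.wordLDeriv_sub hg α h.le, add_mul]
    refine le_trans (le_of_eq ?_) ((abs_sub _ _).trans (add_le_add (h1 α h x y) (h2 α h x y)))
    congr 1; ring

/-- Finite difference of order `k+1` and step `r` in the direction `X`, at `y`. -/
def DX (k : ℕ) (r : ℝ) (F : H3 → ℝ) (y : H3) : ℝ :=
  ∑ i ∈ Finset.range (k + 1 + 1), ((-1 : ℝ) ^ (k + 1 - i) * ((k + 1).choose i : ℝ)) *
    F (Hmul y (Hexp 0 (i * r)))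

lemma DX_eq (k : ℕ) (r : ℝ) (F : H3 → ℝ) (y : H3) :
    DX k r F y = (fwdDiff r)^[k + 1] (fun t => F (Hmul y (Hexp 0 t))) 0 := by
  rw [fwdDiff_iter_eq_sum_shift, DX]
  apply Finset.sum_congr rfl
  intro i _
  simp

lemma DX_sub (k : ℕ) (r : ℝ) (F G : H3 → ℝ) (y : H3) :
    DX k r (fun x => F x - G x) y = DX k r F y - DX k r G y := by
  simp only [DX, mul_sub, Finset.sum_sub_distrib]

lemma DX_add (k : ℕ) (r : ℝ) (F G : H3 → ℝ) (y : H3) :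
    DX k r (fun x => F x + G x) y = DX k r F y + DX k r G y := by
  simp only [DX, mul_add, Finset.sum_add_distrib]

lemma DX_bound (k : ℕ) (r : ℝ) (F : H3 → ℝ) (y : H3) (B : ℝ)
    (h : ∀ i ∈ Finset.range (k + 1 + 1), |F (Hmul y (Hexp 0 (i * r)))| ≤ B) :
    |DX k r F y| ≤ 2 ^ (k + 1) * B := by
  have h2 : (∑ i ∈ Finset.range (k + 1 + 1), ((k + 1).choose i : ℝ)) = 2 ^ (k + 1) := by
    exact_mod_cast Nat.sum_range_choose (k + 1)
  rw [← h2, Finset.sum_mul]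
  refine (Finset.abs_sum_le_sum_abs _ _).trans (Finset.sum_le_sum fun i hi => ?_)
  rw [abs_mul, abs_mul, abs_pow, abs_neg, abs_one, one_pow, one_mul, Nat.abs_cast]
  exact mul_le_mul_of_nonneg_left (h i hi) (Nat.cast_nonneg _)

lemma DX_left (k : ℕ) (r : ℝ) (F : H3 → ℝ) (x y : H3) :
    DX k r F (Hmul x y) = DX k r (fun z => F (Hmul x z)) y := by
  simp only [DX, Hmul_assoc']

lemma fwdDiff_chain (j : ℕ) : ∀ (v : ℕ → ℝ → ℝ)
    (_ : ∀ l < j, ∀ t, HasDerivAt (v l) (v (l + 1) t) t) (h B : ℝ) (_ : 0 ≤ h)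
    (_ : ∀ t, |v j t| ≤ B) (t : ℝ), |(fwdDiff h)^[j] (v 0) t| ≤ h ^ j * B := by
  induction j with
  | zero => intro v _ h B _ hB t; simpa using hB t
  | succ j ih =>
    intro v hv h B hh hB t
    rw [Function.iterate_succ_apply]
    have := ih (fun l => fwdDiff h (v l)) (by
      intro l hl t
      have h1 := hv l (by omega) t
      have h2 := (hv l (by omega) (t + h)).comp_add_const t h
      exact h2.sub h1) h (h * B) hh (by
      intro t
      have := Convex.norm_image_sub_le_of_norm_hasDerivWithin_le (f := v j)
        (C := B) (s := Set.univ) (x := t) (y := t + h)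
        (fun x _ => (hv j (by omega) x).hasDerivWithinAt) (fun x _ => hB x) convex_univ
        (Set.mem_univ _) (Set.mem_univ _)
      simp only [add_sub_cancel_left, Real.norm_eq_abs, abs_of_nonneg hh] at this
      rw [mul_comm h B]
      exact this) t
    rw [pow_succ, mul_assoc]
    exact this

lemma MemCs.holderSemi_le {k : ℕ} {σ : ℝ} {f : H3 → ℝ} (hf : MemCs k σ f)
    (α : List (Fin 3)) (hα : wordWeight α = k) (x y : H3) (hxy : x ≠ y) (hd : 0 < Hdist x y) :
    |wordLDeriv α f x - wordLDeriv α f y| ≤ holderSemi k σ f * Hdist x y ^ σ := by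
  obtain ⟨M, hM⟩ := hf.2.2
  have hdp := Real.rpow_pos_of_pos hd σ
  rw [← div_le_iff₀ hdp]
  apply le_csSup
  · refine ⟨|M|, ?_⟩
    rintro w ⟨β, u, v, hβ, huv, rfl⟩
    by_cases h0 : Hdist u v ^ σ = 0
    · rw [h0, div_zero]; positivity
    · have : 0 < Hdist u v ^ σ := lt_of_le_of_ne
        (Real.rpow_nonneg (Hnorm_nonneg _) _) (Ne.symm h0)
      rw [div_le_iff₀ this]
      refine (hM β hβ u v).trans ?_
      gcongr
      exact le_abs_self M
  · exact ⟨α, x, y, hα, hxy, rfl⟩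

lemma holderSemi_le_CsNorm (k : ℕ) (σ : ℝ) (f : H3 → ℝ) : holderSemi k σ f ≤ CsNorm k σ f := by
  unfold CsNorm
  have : 0 ≤ ∑ n ∈ Finset.range (k + 1), ∑ v : Fin n → Fin 3,
    if wordWeight (List.ofFn v) ≤ k then supDeriv (List.ofFn v) f else 0 := by
    refine Finset.sum_nonneg fun n _ => Finset.sum_nonneg fun v _ => ?_
    split_ifs
    · apply Real.sSup_nonneg
      rintro _ ⟨x, rfl⟩
      exact abs_nonneg _
    · exact le_rfl
  linarith

lemma MemCs.DX_le {k : ℕ} {σ : ℝ} {f : H3 → ℝ} (hf : MemCs k σ f) (r : ℝ) (hr : 0 < r) (y : H3) :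
    |DX k r f y| ≤ CsNorm k σ f * r ^ ((k : ℝ) + σ) := by
  have hw : wordWeight (List.replicate k 0 ++ []) = k := by
    rw [wordWeight_rep]; simp [wordWeight]
  have key := fwdDiff_chain k
    (fun l => fwdDiff r (fun t => wordLDeriv (List.replicate l 0 ++ []) f (Hmul y (Hexp 0 t))))
    (by
      intro l hl t
      have h0 := hf.hd (List.replicate l 0 ++ []) 0 (by
        rw [wordWeight_cons, wordWeight_rep]; simp [wordWeight]; omega)
      have h1 := h0 y t
      have h2 := (h0 y (t + r)).comp_add_const t r
      exact h2.sub h1) r (holderSemi k σ f * r ^ σ) hr.le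
    (by
      intro t
      have e : Hmul y (Hexp 0 (t + r)) = Hmul (Hmul y (Hexp 0 t)) (Hexp 0 r) := by
        rw [Hmul_assoc', Hexp_add]
      have hdist : Hdist (Hmul y (Hexp 0 t)) (Hmul y (Hexp 0 (t + r))) = r := by
        rw [e, Hdist_Hmul_left, Hnorm_exp 0 (by decide), abs_of_pos hr]
      have := hf.holderSemi_le _ hw (Hmul y (Hexp 0 t)) (Hmul y (Hexp 0 (t + r))) (by
        intro h
        have := congrArg Prod.fst h
        simp [Hmul, Hexp_zero'] at this
        exact hr.ne' this) (by rw [hdist]; exact hr)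
      rw [hdist, abs_sub_comm] at this
      exact this) 0
  rw [DX_eq, Function.iterate_succ_apply]
  refine key.trans ?_
  rw [Real.rpow_add hr, Real.rpow_natCast]
  have := holderSemi_le_CsNorm k σ f
  have h2 := Real.rpow_pos_of_pos hr σ
  calc r ^ k * (holderSemi k σ f * r ^ σ) ≤ r ^ k * (CsNorm k σ f * r ^ σ) := by gcongr
    _ = _ := by ring

lemma DX_poly (k : ℕ) (P : MvPolynomial (Fin 3) ℝ) (A : ℝ) (hA : 0 ≤ A) :
    ∃ C : ℝ, 0 ≤ C ∧ ∀ r z, 0 < r → r ≤ 1 → Hnorm z ≤ A * r →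
      |DX k r (evalP P) z| ≤ C * r ^ (k + 1) := by
  induction P using MvPolynomial.induction_on' with
  | monomial d a =>
    have hev : ∀ x, evalP (MvPolynomial.monomial d a) x =
        a * (x.1 ^ d 0 * x.2.1 ^ d 1 * x.2.2 ^ d 2) := by
      intro x
      rw [evalP, MvPolynomial.eval_monomial, Finsupp.prod_fintype _ _ (by simp)]
      simp [Fin.prod_univ_three, coords]
    by_cases hd : d 0 + d 1 + 2 * d 2 ≤ k
    · refine ⟨0, le_rfl, fun r z _ _ _ => ?_⟩
      suffices h : DX k r (evalP (MvPolynomial.monomial d a)) z = 0 by rw [h]; simp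
      rw [DX_eq]
      set Q : Polynomial ℝ := Polynomial.C a * ((Polynomial.C z.1 + Polynomial.C r *
        Polynomial.X) ^ d 0 * Polynomial.C (z.2.1 ^ d 1) *
        (Polynomial.C z.2.2 + Polynomial.C (2 * z.2.1 * r) * Polynomial.X) ^ d 2) with hQ
      have hdeg : Q.natDegree < k + 1 := by
        have : Q.natDegree ≤ 0 + ((d 0 * 1 + 0) + d 2 * 1) := by
          rw [hQ]
          have hl : ∀ u v : ℝ, (Polynomial.C u + Polynomial.C v * Polynomial.X).natDegree ≤ 1 := by
            intro u v
            compute_degree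
          refine Polynomial.natDegree_mul_le_of_le (by simp) ?_
          refine Polynomial.natDegree_mul_le_of_le ?_ (Polynomial.natDegree_pow_le_of_le _ (hl _ _))
          exact Polynomial.natDegree_mul_le_of_le (Polynomial.natDegree_pow_le_of_le _ (hl _ _))
            (by rw [Polynomial.natDegree_C])
        omega
      have h0 := congrFun (Polynomial.fwdDiff_iter_eq_zero_of_degree_lt hdeg) 0
      rw [fwdDiff_iter_eq_sum_shift] at h0 ⊢
      rw [Pi.zero_apply] at h0
      refine Eq.trans ?_ h0
      apply Finset.sum_congr rfl
      intro i _
      congr 1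
      rw [hev]
      simp [hQ, Hmul, Hexp_zero']
      left
      ring_nf
    · set w := d 0 + d 1 + 2 * d 2 with hwdef
      set A' := 2 * (A + (k + 1)) with hA'
      have hA'0 : 0 ≤ A' := by positivity
      refine ⟨2 ^ (k + 1) * (|a| * A' ^ w), by positivity, fun r z hr hr1 hz => ?_⟩
      rw [mul_assoc]
      apply DX_bound
      intro i hi
      have hi' : (i : ℝ) ≤ k + 1 := by
        have : i ≤ k + 1 := by simpa [Nat.lt_succ_iff] using hi
        exact_mod_cast this
      set x := Hmul z (Hexp 0 (i * r)) with hx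
      have hN : Hnorm x ≤ A' * r := by
        refine (Hnorm_mul_le _ _).trans ?_
        rw [Hnorm_exp 0 (by decide), abs_of_nonneg (by positivity), hA']
        have : (i : ℝ) * r ≤ (k + 1) * r := by gcongr
        linarith
      have hN0 := Hnorm_nonneg x
      rw [hev, abs_mul, abs_mul, abs_mul, abs_pow, abs_pow, abs_pow, mul_assoc |a| (A' ^ w)]
      refine mul_le_mul_of_nonneg_left ?_ (abs_nonneg a)
      calc |x.1| ^ d 0 * |x.2.1| ^ d 1 * |x.2.2| ^ d 2
          ≤ Hnorm x ^ d 0 * Hnorm x ^ d 1 * (Hnorm x ^ 2) ^ d 2 := by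
            gcongr
            · exact abs_fst_le x
            · exact abs_snd_le x
            · exact abs_trd_le x
        _ = Hnorm x ^ w := by rw [hwdef, pow_add, pow_add, pow_mul]
        _ ≤ (A' * r) ^ w := by gcongr
        _ = A' ^ w * r ^ w := by rw [mul_pow]
        _ ≤ A' ^ w * r ^ (k + 1) := by
            gcongr ?_ * ?_
            exact pow_le_pow_of_le_one hr.le hr1 (by omega)
  | add p q hp hq =>
    obtain ⟨C1, h1, hp⟩ := hp
    obtain ⟨C2, h2, hq⟩ := hq
    refine ⟨C1 + C2, by positivity, fun r z hr hr1 hz => ?_⟩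
    have : evalP (p + q) = fun x => evalP p x + evalP q x := by
      funext x; simp [evalP]
    rw [this, DX_add, add_mul]
    exact (abs_add_le _ _).trans (add_le_add (hp r z hr hr1 hz) (hq r z hr hr1 hz))

/-- The generic set. -/
def Rset (k : ℕ) (σ : ℝ) : Set (H3 → ℝ) :=
  {f | MemCs k σ f ∧ ∃ c : ℝ, 0 < c ∧ ∃ A : ℝ, 0 < A ∧ ∀ x₀ : H3, ∀ η : ℝ, 0 < η →
    ∃ r : ℝ, 0 < r ∧ r < η ∧ ∃ z : H3, Hnorm z ≤ A * r ∧
      c * r ^ ((k : ℝ) + σ) ≤ |DX k r f (Hmul x₀ z)|}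

lemma Rset_open {k : ℕ} {σ : ℝ} {f : H3 → ℝ} (hf : f ∈ Rset k σ) :
    ∃ ε : ℝ, 0 < ε ∧ ∀ g : H3 → ℝ, MemCs k σ g →
          CsNorm k σ (fun x => f x - g x) < ε → g ∈ Rset k σ := by
  obtain ⟨hfm, c, hc, A, hA, h⟩ := hf
  refine ⟨c / 2, by positivity, fun g hg hfg => ⟨hg, c / 2, by positivity, A, hA, ?_⟩⟩
  intro x₀ η hη
  obtain ⟨r, hr, hrη, z, hz, hb⟩ := h x₀ η hη
  refine ⟨r, hr, hrη, z, hz, ?_⟩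
  have h1 := (hfm.sub hg).DX_le r hr (Hmul x₀ z)
  rw [DX_sub] at h1
  have h2 := Real.rpow_pos_of_pos hr ((k : ℝ) + σ)
  have h3 : CsNorm k σ (fun x => f x - g x) * r ^ ((k : ℝ) + σ) ≤ c / 2 * r ^ ((k : ℝ) + σ) := by
    gcongr
  have h4 := abs_sub_abs_le_abs_sub (DX k r f (Hmul x₀ z)) (DX k r g (Hmul x₀ z))
  linarith

lemma Rset_upper {k : ℕ} {σ : ℝ} (hσ0 : 0 < σ) (hσ1 : σ < 1) {f : H3 → ℝ} (hf : f ∈ Rset k σ)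
    (x₀ : H3) (t : ℝ) (ht : MemCsAt t x₀ f) : t ≤ (k : ℝ) + σ := by
  by_contra hts
  push Not at hts
  obtain ⟨hfm, c, hc, A, hA, h⟩ := hf
  obtain ⟨C, hC, η, hη, P, -, hP⟩ := ht
  obtain ⟨C2, hC2, hpoly⟩ := DX_poly k P A hA.le
  set A' := 2 * (A + (k + 1)) with hA'
  have hA'0 : 0 < A' := by positivity
  have ht0 : 0 < t := lt_trans (by positivity) hts
  set C1 := 2 ^ (k + 1) * (C * A' ^ t) with hC1
  have lim : Filter.Tendsto (fun r : ℝ => C1 * r ^ (t - (k + σ)) + C2 * r ^ (1 - σ))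
      (nhds 0) (nhds (C1 * 0 ^ (t - (k + σ)) + C2 * 0 ^ (1 - σ))) := by
    refine Filter.Tendsto.add ?_ ?_ <;> refine Filter.Tendsto.const_mul _ ?_
    · exact (Real.continuousAt_rpow_const 0 _ (Or.inr (by linarith)))
    · exact (Real.continuousAt_rpow_const 0 _ (Or.inr (by linarith)))
  rw [Real.zero_rpow (by linarith), Real.zero_rpow (by linarith)] at lim
  simp only [mul_zero, add_zero] at lim
  have ev := lim.eventually (gt_mem_nhds hc)
  obtain ⟨ρ, hρ, hρ'⟩ := Metric.eventually_nhds_iff.mp ev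
  obtain ⟨r, hr, hrη, z, hz, hb⟩ := h x₀ (min ρ (min 1 (η / A'))) (by positivity)
  have hr1 : r < ρ := hrη.trans_le (min_le_left _ _)
  have hr2 : r < 1 := hrη.trans_le ((min_le_right _ _).trans (min_le_left _ _))
  have hr3 : r < η / A' := hrη.trans_le ((min_le_right _ _).trans (min_le_right _ _))
  have hr3' : A' * r < η := by rw [lt_div_iff₀ hA'0] at hr3; linarith
  have h1 := hρ' (y := r) (by simp [abs_of_pos hr, hr1])
  have hp := hpoly r z hr hr2.le hz
  have hE : |DX k r (fun x => f (Hmul x₀ x) - evalP P x) z| ≤ 2 ^ (k + 1) * (C * (A' * r) ^ t) := by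
    apply DX_bound
    intro i hi
    have hi' : (i : ℝ) ≤ k + 1 := by
      have : i ≤ k + 1 := by simpa [Nat.lt_succ_iff] using hi
      exact_mod_cast this
    set x := Hmul z (Hexp 0 (i * r)) with hx
    have hN : Hnorm x ≤ A' * r := by
      refine (Hnorm_mul_le _ _).trans ?_
      rw [Hnorm_exp 0 (by decide), abs_of_nonneg (by positivity), hA']
      have : (i : ℝ) * r ≤ (k + 1) * r := by gcongr
      linarith
    have hN0 := Hnorm_nonneg x
    refine (hP x (by linarith)).trans ?_
    gcongr
  rw [DX_sub] at hE
  rw [DX_left] at hb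
  have hsum : |DX k r (fun z => f (Hmul x₀ z)) z| ≤ C1 * r ^ t + C2 * r ^ (k + 1) := by
    have := abs_sub_abs_le_abs_sub (DX k r (fun z => f (Hmul x₀ z)) z) (DX k r (evalP P) z)
    rw [Real.mul_rpow hA'0.le hr.le] at hE
    have e : 2 ^ (k + 1) * (C * (A' ^ t * r ^ t)) = C1 * r ^ t := by rw [hC1]; ring
    rw [e] at hE
    have hE' : |DX k r (fun z => f (Hmul x₀ z)) z - DX k r (evalP P) z| ≤ C1 * r ^ t := hE
    linarith
  have hrs := Real.rpow_pos_of_pos hr ((k : ℝ) + σ)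
  have e1 : r ^ t = r ^ (t - (k + σ)) * r ^ ((k : ℝ) + σ) := by
    rw [← Real.rpow_add hr]; congr 1; ring
  have e2 : r ^ (k + 1) = r ^ (1 - σ) * r ^ ((k : ℝ) + σ) := by
    rw [← Real.rpow_add hr, ← Real.rpow_natCast]; congr 1; push_cast; ring
  have h5 := mul_lt_mul_of_pos_right h1 hrs
  rw [e1, e2] at hsum
  nlinarith

lemma Rset_exponent {k : ℕ} {σ : ℝ} (hσ0 : 0 < σ) (hσ1 : σ < 1) {f : H3 → ℝ}
    (hf : f ∈ Rset k σ) (x₀ : H3) : holderExponent f x₀ = (k : ℝ) + σ := by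
  have : IsGreatest {t : ℝ | 0 < t ∧ MemCsAt t x₀ f} ((k : ℝ) + σ) :=
    ⟨⟨by positivity, hf.1.memCsAt hσ0 x₀⟩, fun t ht => Rset_upper hσ0 hσ1 hf x₀ t ht.2⟩
  exact this.csSup_eq

section Aux

open scoped ContDiff

lemma smooth_lDeriv_eq (i : Fin 3) {f : H3 → ℝ} (hf : ContDiff ℝ ∞ f) :
    lDeriv i f = fun x => fderiv ℝ f x (hvec i x) := by
  funext x
  have : DifferentiableAt ℝ f x := (hf.differentiable (by simp)) x
  exact this.lineDeriv_eq_fderiv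

lemma contDiff_hvec (i : Fin 3) : ContDiff ℝ ∞ (hvec i) := by
  fin_cases i
  · have : hvec 0 = fun x => (1, 0, 2 * x.2.1) := by funext x; simp [hvec]
    simp only [Fin.zero_eta, this]; fun_prop
  · have : hvec 1 = fun x => (0, 1, -2 * x.1) := by funext x; simp [hvec]
    simp only [Fin.mk_one, this]; fun_prop
  · have : hvec 2 = fun x => (0, 0, 1) := by funext x; rfl
    simp only [Fin.reduceFinMk, this]; fun_prop

lemma smooth_lDeriv (i : Fin 3) {f : H3 → ℝ} (hf : ContDiff ℝ ∞ f) :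
    ContDiff ℝ ∞ (lDeriv i f) := by
  rw [smooth_lDeriv_eq i hf]
  exact (hf.fderiv_right (m := ∞) (by simp)).clm_apply (contDiff_hvec i)

lemma smooth_word (α : List (Fin 3)) {f : H3 → ℝ} (hf : ContDiff ℝ ∞ f) :
    ContDiff ℝ ∞ (wordLDeriv α f) := by
  induction α with
  | nil => exact hf
  | cons i α ih => exact smooth_lDeriv i ih

lemma smooth_HD (α : List (Fin 3)) (i : Fin 3) {f : H3 → ℝ} (hf : ContDiff ℝ ∞ f) :
    HD i (wordLDeriv α f) (wordLDeriv (i :: α) f) := by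
  apply HD.of_lineDiff
  intro x
  exact (((smooth_word α hf).differentiable (by simp)) x).lineDifferentiableAt

lemma compact_word (α : List (Fin 3)) {f : H3 → ℝ} (hf : ContDiff ℝ ∞ f)
    (hc : HasCompactSupport f) : HasCompactSupport (wordLDeriv α f) := by
  induction α with
  | nil => exact hc
  | cons i α ih =>
    refine ih.mono' ?_
    change Function.support (lDeriv i (wordLDeriv α f)) ⊆ _
    rw [smooth_lDeriv_eq i (smooth_word α hf)]
    refine subset_trans ?_ (support_fderiv_subset ℝ)
    intro x hx
    rw [Function.mem_support] at hx ⊢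
    intro h
    rw [h] at hx
    simp at hx

lemma word_bounded (α : List (Fin 3)) {f : H3 → ℝ} (hf : ContDiff ℝ ∞ f)
    (hc : HasCompactSupport f) : ∃ M : ℝ, ∀ x, |wordLDeriv α f x| ≤ M :=
  (smooth_word α hf).continuous.bounded_above_of_compact_support (compact_word α hf hc)

lemma word_bounded_unif (K : ℕ) {f : H3 → ℝ} (hf : ContDiff ℝ ∞ f)
    (hc : HasCompactSupport f) :
    ∃ M : ℝ, 0 ≤ M ∧ ∀ α : List (Fin 3), wordWeight α ≤ K → ∀ x, |wordLDeriv α f x| ≤ M := by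
  choose M hM using fun α => word_bounded α hf hc
  have hfin := (List.finite_length_le (Fin 3) K).image M
  obtain ⟨B, hB⟩ := hfin.bddAbove
  have hlen : ∀ α : List (Fin 3), α.length ≤ wordWeight α := by
    intro α
    induction α with
    | nil => simp
    | cons i α ih =>
      rw [wordWeight_cons, List.length_cons]
      split_ifs <;> omega
  refine ⟨|B|, abs_nonneg _, fun α hα x => (hM α x).trans ((hB ?_).trans (le_abs_self B))⟩
  exact ⟨α, (hlen α).trans hα, rfl⟩

lemma word_local (α : List (Fin 3)) {f g : H3 → ℝ} {x : H3} (h : f =ᶠ[nhds x] g) :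
    wordLDeriv α f =ᶠ[nhds x] wordLDeriv α g := by
  induction α with
  | nil => exact h
  | cons i α ih =>
    filter_upwards [ih.eventuallyEq_nhds] with y hy
    exact hy.lineDeriv_eq

lemma lDeriv_eq_deriv (i : Fin 3) (f : H3 → ℝ) (x : H3) :
    lDeriv i f x = deriv (fun t => f (Hmul x (Hexp i t))) 0 := by
  rw [lDeriv, lineDeriv]
  simp only [add_smul_hvec]

lemma word_translate (α : List (Fin 3)) (f : H3 → ℝ) (c : ℝ) (a : H3) :
    wordLDeriv α (fun x => c * f (Hmul a x)) = fun x => c * wordLDeriv α f (Hmul a x) := by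
  induction α with
  | nil => rfl
  | cons i α ih =>
    funext x
    change lDeriv i (wordLDeriv α (fun x => c * f (Hmul a x))) x = c * lDeriv i (wordLDeriv α f) _
    rw [ih, lDeriv_eq_deriv, lDeriv_eq_deriv, deriv_const_mul_field]
    simp only [Hmul_assoc']

lemma Hdil_mul (l : ℝ) (x y : H3) : Hdil l (Hmul x y) = Hmul (Hdil l x) (Hdil l y) := by
  simp only [Hdil, Hmul, Prod.mk.injEq]
  refine ⟨by ring, by ring, by ring⟩

lemma Hdil_exp (l : ℝ) (i : Fin 3) (t : ℝ) :
    Hdil l (Hexp i t) = Hexp i (l ^ (if i = 2 then 2 else 1) * t) := by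
  fin_cases i
  · simp [Hdil, Hexp]
  · simp [Hdil, Hexp]
  · simp [Hdil, Hexp_two']

lemma word_dil (α : List (Fin 3)) (f : H3 → ℝ) (c l : ℝ) :
    wordLDeriv α (fun x => c * f (Hdil l x)) =
      fun x => c * l ^ wordWeight α * wordLDeriv α f (Hdil l x) := by
  induction α with
  | nil => simp [wordLDeriv, wordWeight]
  | cons i α ih =>
    funext x
    change lDeriv i (wordLDeriv α (fun x => c * f (Hdil l x))) x =
      c * l ^ wordWeight (i :: α) * lDeriv i (wordLDeriv α f) _
    rw [ih, lDeriv_eq_deriv, lDeriv_eq_deriv, deriv_const_mul_field]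
    simp only [Hdil_mul, Hdil_exp]
    have := deriv_comp_mul_left (l ^ (if i = 2 then 2 else 1))
      (fun t => wordLDeriv α f (Hmul (Hdil l x) (Hexp i t))) 0
    rw [this, wordWeight_cons, mul_zero, smul_eq_mul, pow_add]
    ring

/-- The step of the finite differences at unit scale. -/
def stepH (k : ℕ) : ℝ := 1 / (4 * ((k : ℝ) + 1))

lemma stepH_pos (k : ℕ) : 0 < stepH k := by unfold stepH; positivity

lemma stepH_le (k : ℕ) : stepH k * (k + 1) = 1 / 4 := by
  unfold stepH; field_simp

lemma stepH_le' (k : ℕ) : stepH k ≤ 1 / 4 := by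
  have := stepH_le k
  have h := stepH_pos k
  have : (0:ℝ) ≤ k := by positivity
  nlinarith

lemma exists_bump (k : ℕ) : ∃ φ : H3 → ℝ, ContDiff ℝ ∞ φ ∧ HasCompactSupport φ ∧
    (∀ x, |φ x| ≤ 1) ∧ φ 0 = 1 ∧ ∀ x, stepH k ≤ ‖x‖ → φ x = 0 := by
  have h := stepH_pos k
  let b : ContDiffBump (0 : H3) := ⟨stepH k / 2, stepH k, by positivity, by linarith⟩
  refine ⟨b, b.contDiff, b.hasCompactSupport, fun x => ?_, ?_, fun x hx => ?_⟩
  · rw [abs_of_nonneg b.nonneg]; exact b.le_one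
  · exact b.one_of_mem_closedBall (by simp [b]; linarith)
  · apply b.zero_of_le_dist
    rw [dist_zero_right]; exact hx

/-- Nearest lattice point. -/
def kap (x : H3) : ℤ × ℤ × ℤ :=
  (round x.1, round x.2.1, round (x.2.2 + 2 * (round x.1 * x.2.1 - round x.2.1 * x.1)))

/-- Coordinates relative to a lattice point. -/
def rel (κ : ℤ × ℤ × ℤ) (x : H3) : H3 := Hmul (Hinv (latticePt κ)) x

lemma rel_def (κ : ℤ × ℤ × ℤ) (x : H3) : rel κ x = (x.1 - κ.1, x.2.1 - κ.2.1,
    x.2.2 + 2 * (κ.1 * x.2.1 - κ.2.1 * x.1) - κ.2.2) := by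
  simp only [rel, Hmul, Hinv, latticePt, Prod.mk.injEq]
  refine ⟨by ring, by ring, by ring⟩

lemma rel_kap (x : H3) : ‖rel (kap x) x‖ ≤ 1 / 2 := by
  rw [rel_def]
  simp only [Prod.norm_def, sup_le_iff, Real.norm_eq_abs]
  exact ⟨abs_sub_round _, abs_sub_round _, abs_sub_round _⟩

lemma int_eq_of {a b : ℤ} {x y : ℝ} (h : |x - y| < 1) (h' : x - y = (a : ℝ) - b) : a = b := by
  rw [h'] at h
  have : |a - b| < 1 := by exact_mod_cast h
  have := Int.abs_lt_one_iff.mp this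
  omega

lemma rel_sep (κ κ' : ℤ × ℤ × ℤ) (x : H3) (h : ‖rel κ x‖ + ‖rel κ' x‖ < 1) : κ = κ' := by
  have h := (norm_sub_le (rel κ x) (rel κ' x)).trans_lt h
  rw [rel_def, rel_def] at h
  simp only [Prod.norm_def, sup_lt_iff, Real.norm_eq_abs, Prod.mk_sub_mk] at h
  obtain ⟨h1, h2, h3⟩ := h
  have e1 : κ'.1 = κ.1 := int_eq_of h1 (by ring)
  have e2 : κ'.2.1 = κ.2.1 := int_eq_of h2 (by ring)
  have e3 : κ'.2.2 = κ.2.2 := int_eq_of h3 (by rw [e1, e2]; ring)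
  exact Prod.ext e1.symm (Prod.ext e2.symm e3.symm)

/-- A superposition of disjoint bumps, at unit scale. -/
def Phi (φ : H3 → ℝ) (e : ℤ × ℤ × ℤ → ℝ) (x : H3) : ℝ := e (kap x) * φ (rel (kap x) x)

lemma Phi_eq {k : ℕ} {φ : H3 → ℝ} (hφ : ∀ x, stepH k ≤ ‖x‖ → φ x = 0) (e : ℤ × ℤ × ℤ → ℝ)
    (κ : ℤ × ℤ × ℤ) (x : H3) (hx : ‖rel κ x‖ < 3 / 4) : Phi φ e x = e κ * φ (rel κ x) := by
  by_cases h : kap x = κ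
  · rw [Phi, h]
  · have h1 := rel_kap x
    have hs := stepH_le' k
    have z1 : φ (rel (kap x) x) = 0 := by
      apply hφ
      by_contra hc
      exact h (rel_sep _ _ x (by linarith))
    have z2 : φ (rel κ x) = 0 := by
      apply hφ
      by_contra hc
      exact h (rel_sep _ _ x (by linarith))
    rw [Phi, z1, z2]; simp

lemma contDiff_rel (κ : ℤ × ℤ × ℤ) : ContDiff ℝ ∞ (rel κ) := by
  have : rel κ = fun x => (x.1 - (κ.1 : ℝ), x.2.1 - (κ.2.1 : ℝ),
    x.2.2 + 2 * ((κ.1 : ℝ) * x.2.1 - (κ.2.1 : ℝ) * x.1) - (κ.2.2 : ℝ)) := funext (rel_def κ)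
  rw [this]
  fun_prop

lemma Phi_local {k : ℕ} {φ : H3 → ℝ} (hφ : ∀ x, stepH k ≤ ‖x‖ → φ x = 0) (e : ℤ × ℤ × ℤ → ℝ)
    (x : H3) : Phi φ e =ᶠ[nhds x] fun y => e (kap x) * φ (rel (kap x) y) := by
  have hc : Continuous fun y => ‖rel (kap x) y‖ := (contDiff_rel (kap x)).continuous.norm
  have : ∀ᶠ y in nhds x, ‖rel (kap x) y‖ < 3 / 4 :=
    hc.continuousAt.eventually_lt continuousAt_const (by have := rel_kap x; linarith)
  filter_upwards [this] with y hy
  exact Phi_eq hφ e (kap x) y hy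

lemma Phi_smooth {k : ℕ} {φ : H3 → ℝ} (hs : ContDiff ℝ ∞ φ)
    (hφ : ∀ x, stepH k ≤ ‖x‖ → φ x = 0) (e : ℤ × ℤ × ℤ → ℝ) : ContDiff ℝ ∞ (Phi φ e) := by
  rw [contDiff_iff_contDiffAt]
  intro x
  refine ContDiffAt.congr_of_eventuallyEq ?_ (Phi_local hφ e x)
  exact (contDiff_const.mul (hs.comp (contDiff_rel _))).contDiffAt

lemma Phi_bound {k : ℕ} {φ : H3 → ℝ} (hφ : ∀ x, stepH k ≤ ‖x‖ → φ x = 0)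
    (α : List (Fin 3)) (M : ℝ) (hM : ∀ x, |wordLDeriv α φ x| ≤ M)
    (e : ℤ × ℤ × ℤ → ℝ) (δ : ℝ) (hδ : ∀ κ, |e κ| ≤ δ) (x : H3) :
    |wordLDeriv α (Phi φ e) x| ≤ δ * M := by
  have h1 := (word_local α (Phi_local hφ e x)).self_of_nhds
  have h2 := congrFun (word_translate α φ (e (kap x)) (Hinv (latticePt (kap x)))) x
  change wordLDeriv α (Phi φ e) x = wordLDeriv α (fun y => e (kap x) * φ (Hmul _ y)) x at h1
  rw [h1, h2, abs_mul]
  have h0 : 0 ≤ δ := (abs_nonneg _).trans (hδ (kap x))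
  exact mul_le_mul (hδ _) (hM _) (abs_nonneg _) h0

lemma psi_tail {L σ : ℝ} (hL : 1 < L) (hσ0 : 0 < σ) (N : ℕ) : ∀ d : ℝ, 0 < d →
    ∑ n ∈ Finset.range N, min ((L ^ n * d) ^ (1 - σ)) ((L ^ n * d) ^ (-σ)) ≤
      d ^ (-σ) * (1 - L ^ (-σ))⁻¹ := by
  have hq : L ^ (-σ) < 1 := Real.rpow_lt_one_of_one_lt_of_neg hL (by linarith)
  have hq' : (1 - L ^ (-σ)) * (1 - L ^ (-σ))⁻¹ = 1 := mul_inv_cancel₀ (by linarith)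
  have hq0 : 0 < (1 - L ^ (-σ))⁻¹ := inv_pos.2 (by linarith)
  induction N with
  | zero => intro d hd; simp; positivity
  | succ N ih =>
    intro d hd
    rw [Finset.sum_range_succ']
    have h1 := ih (L * d) (by positivity)
    have h2 : ∀ n : ℕ, L ^ (n + 1) * d = L ^ n * (L * d) := fun n => by ring
    simp only [h2]
    rw [Real.mul_rpow (by positivity) hd.le] at h1
    have h3 : min ((L ^ 0 * d) ^ (1 - σ)) ((L ^ 0 * d) ^ (-σ)) ≤ d ^ (-σ) := by
      refine (min_le_right _ _).trans ?_
      simp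
    simp only [pow_zero, one_mul] at h3 ⊢
    have h4 : L ^ (-σ) * d ^ (-σ) * (1 - L ^ (-σ))⁻¹ + d ^ (-σ) = d ^ (-σ) * (1 - L ^ (-σ))⁻¹ := by
      linear_combination (- d ^ (-σ)) * hq'
    linarith

lemma psi_head {L σ : ℝ} (hL : 1 < L) (hσ0 : 0 < σ) (hσ1 : σ < 1) (N : ℕ) : ∀ d : ℝ, 0 < d →
    d ≤ L → ∑ n ∈ Finset.range N, min ((L ^ n * d) ^ (1 - σ)) ((L ^ n * d) ^ (-σ)) ≤
      (1 - L ^ (-σ))⁻¹ + (L ^ (1 - σ) - 1)⁻¹ * (L ^ (1 - σ) - d ^ (1 - σ)) := by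
  have hq : L ^ (-σ) < 1 := Real.rpow_lt_one_of_one_lt_of_neg hL (by linarith)
  have hq0 : 0 < (1 - L ^ (-σ))⁻¹ := inv_pos.2 (by linarith)
  have hp : 1 < L ^ (1 - σ) := Real.one_lt_rpow hL (by linarith)
  have hp' : (L ^ (1 - σ) - 1) * (L ^ (1 - σ) - 1)⁻¹ = 1 := mul_inv_cancel₀ (by linarith)
  have hp0 : 0 < (L ^ (1 - σ) - 1)⁻¹ := inv_pos.2 (by linarith)
  have hmono : ∀ d : ℝ, 0 < d → d ≤ L → 0 ≤ (L ^ (1 - σ) - 1)⁻¹ * (L ^ (1 - σ) - d ^ (1 - σ)) := by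
    intro d hd hdL
    apply mul_nonneg hp0.le
    have := Real.rpow_le_rpow hd.le hdL (by linarith : 0 ≤ 1 - σ)
    linarith
  induction N with
  | zero => intro d hd hdL; have := hmono d hd hdL; simp; linarith
  | succ N ih =>
    intro d hd hdL
    rcases le_or_gt 1 d with h1 | h1
    · refine (psi_tail hL hσ0 _ d hd).trans ?_
      have := hmono d hd hdL
      have h2 : d ^ (-σ) ≤ 1 := Real.rpow_le_one_of_one_le_of_nonpos h1 (by linarith)
      have := mul_le_mul_of_nonneg_right h2 hq0.le
      linarith
    rw [Finset.sum_range_succ']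
    have h1 := ih (L * d) (by positivity) (by nlinarith)
    have h2 : ∀ n : ℕ, L ^ (n + 1) * d = L ^ n * (L * d) := fun n => by ring
    simp only [h2]
    rw [Real.mul_rpow (by positivity : (0:ℝ) ≤ L) hd.le] at h1
    have h3 : min ((L ^ 0 * d) ^ (1 - σ)) ((L ^ 0 * d) ^ (-σ)) ≤ d ^ (1 - σ) := by
      refine (min_le_left _ _).trans ?_
      simp
    simp only [pow_zero, one_mul] at h3 ⊢
    have h4 : (L ^ (1 - σ) - 1)⁻¹ * (L ^ (1 - σ) - L ^ (1 - σ) * d ^ (1 - σ)) + d ^ (1 - σ) =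
      (L ^ (1 - σ) - 1)⁻¹ * (L ^ (1 - σ) - d ^ (1 - σ)) := by
      linear_combination (- d ^ (1 - σ)) * hp'
    linarith

lemma psi_sum {L σ : ℝ} (hL : 1 < L) (hσ0 : 0 < σ) (hσ1 : σ < 1) : ∃ C : ℝ, 0 ≤ C ∧
    ∀ d : ℝ, 0 < d →
    Summable (fun n : ℕ => min ((L ^ n * d) ^ (1 - σ)) ((L ^ n * d) ^ (-σ))) ∧
    ∑' n : ℕ, min ((L ^ n * d) ^ (1 - σ)) ((L ^ n * d) ^ (-σ)) ≤ C := by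
  have hq : L ^ (-σ) < 1 := Real.rpow_lt_one_of_one_lt_of_neg hL (by linarith)
  have hq0 : 0 < (1 - L ^ (-σ))⁻¹ := inv_pos.2 (by linarith)
  have hp : 1 < L ^ (1 - σ) := Real.one_lt_rpow hL (by linarith)
  have hp0 : 0 < (L ^ (1 - σ) - 1)⁻¹ := inv_pos.2 (by linarith)
  have hL0 : 0 < L := by linarith
  refine ⟨(1 - L ^ (-σ))⁻¹ + (L ^ (1 - σ) - 1)⁻¹ * L ^ (1 - σ), by positivity, fun d hd => ?_⟩
  have hnn : ∀ n : ℕ, 0 ≤ min ((L ^ n * d) ^ (1 - σ)) ((L ^ n * d) ^ (-σ)) :=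
    fun n => le_min (by positivity) (by positivity)
  have hb : ∀ N : ℕ, ∑ n ∈ Finset.range N, min ((L ^ n * d) ^ (1 - σ)) ((L ^ n * d) ^ (-σ)) ≤
      (1 - L ^ (-σ))⁻¹ + (L ^ (1 - σ) - 1)⁻¹ * L ^ (1 - σ) := by
    intro N
    rcases le_or_gt d L with h | h
    · refine (psi_head hL hσ0 hσ1 N d hd h).trans ?_
      have : 0 < d ^ (1 - σ) := by positivity
      nlinarith
    · refine (psi_tail hL hσ0 N d hd).trans ?_
      have h2 : d ^ (-σ) ≤ 1 := Real.rpow_le_one_of_one_le_of_nonpos (by linarith) (by linarith)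
      have := mul_le_mul_of_nonneg_right h2 hq0.le
      have : 0 < (L ^ (1 - σ) - 1)⁻¹ * L ^ (1 - σ) := by positivity
      linarith
  exact ⟨summable_of_sum_range_le hnn hb, Real.tsum_le_of_sum_range_le hnn hb⟩

/-- The amplitude of derivatives of order `j` at scale `n`. -/
def amp (L s : ℝ) (n j : ℕ) : ℝ := (L ^ n) ^ ((j : ℝ) - s)

lemma amp_pos {L : ℝ} (hL : 1 < L) (s : ℝ) (n j : ℕ) : 0 < amp L s n j := by
  have : 0 < L := by linarith
  unfold amp; positivity

lemma amp_eq {L : ℝ} (hL : 1 < L) (s : ℝ) (n j : ℕ) : amp L s n j = (L ^ ((j : ℝ) - s)) ^ n := by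
  have : 0 < L := by linarith
  rw [amp, ← Real.rpow_natCast, ← Real.rpow_natCast, ← Real.rpow_mul this.le,
    ← Real.rpow_mul this.le, mul_comm]

lemma amp_summable {L : ℝ} (hL : 1 < L) {s : ℝ} {j : ℕ} (hj : (j : ℝ) < s) :
    Summable (fun n => amp L s n j) := by
  have : 0 < L := by linarith
  simp only [amp_eq hL]
  apply summable_geometric_of_lt_one (by positivity)
  exact Real.rpow_lt_one_of_one_lt_of_neg hL (by linarith)

lemma amp_mul {L : ℝ} (hL : 1 < L) (s : ℝ) (n j i : ℕ) :
    amp L s n j * (L ^ n) ^ i = amp L s n (j + i) := by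
  have : 0 < L := by linarith
  rw [amp, amp, ← Real.rpow_natCast (L ^ n) i, ← Real.rpow_add (by positivity)]
  congr 1; push_cast; ring

lemma HD.lip {i : Fin 3} {f g : H3 → ℝ} (h : HD i f g) {B : ℝ} (hB : ∀ x, |g x| ≤ B) (x : H3)
    (t : ℝ) : |f (Hmul x (Hexp i t)) - f x| ≤ B * |t| := by
  have := Convex.norm_image_sub_le_of_norm_hasDerivWithin_le
    (f := fun u => f (Hmul x (Hexp i u))) (C := B) (s := Set.univ) (x := 0) (y := t)
    (fun u _ => (h x u).hasDerivWithinAt) (fun u _ => hB _) convex_univ (Set.mem_univ _)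
    (Set.mem_univ _)
  simpa [Hmul_Hexp_zero] using this

lemma Hmul_factor (x₀ x : H3) : Hmul x₀ x = Hmul (Hmul (Hmul x₀ (Hexp 0 x.1)) (Hexp 1 x.2.1))
    (Hexp 2 (x.2.2 + 2 * (x.1 * x.2.1))) := by
  simp only [Hexp_zero', Hexp_one', Hexp_two', Hmul, Prod.mk.injEq]
  refine ⟨by ring, by ring, by ring⟩

/-- A sequence of smooth functions with the right scaling. -/
structure Scaled (L : ℝ) (k : ℕ) (σ B : ℝ) (T : ℕ → H3 → ℝ) : Prop where
  smooth : ∀ n, ContDiff ℝ ∞ (T n)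
  bound : ∀ n α, wordWeight α ≤ k + 2 → ∀ x, |wordLDeriv α (T n) x| ≤
    B * amp L ((k : ℝ) + σ) n (wordWeight α)

lemma Scaled.nonneg {L σ B : ℝ} {k : ℕ} {T : ℕ → H3 → ℝ} (hL : 1 < L) (h : Scaled L k σ B T) :
    0 ≤ B := by
  have := (abs_nonneg _).trans (h.bound 0 [] (by simp [wordWeight]) 0)
  exact nonneg_of_mul_nonneg_left this (amp_pos hL _ _ _)

lemma Scaled.summable {L σ B : ℝ} {k : ℕ} {T : ℕ → H3 → ℝ} (hL : 1 < L) (hσ0 : 0 < σ)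
    (h : Scaled L k σ B T) (α : List (Fin 3)) (hα : wordWeight α ≤ k) (x : H3) :
    Summable (fun n => wordLDeriv α (T n) x) := by
  have hj : (wordWeight α : ℝ) < k + σ := by
    have : (wordWeight α : ℝ) ≤ k := by exact_mod_cast hα
    linarith
  exact Summable.of_norm_bounded ((amp_summable hL hj).mul_left B)
    (fun n => h.bound n α (by omega) x)

lemma Scaled.hd {L σ B : ℝ} {k : ℕ} {T : ℕ → H3 → ℝ} (hL : 1 < L) (hσ0 : 0 < σ)
    (h : Scaled L k σ B T) (α : List (Fin 3)) (i : Fin 3) (hα : wordWeight (i :: α) ≤ k) :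
    HD i (fun x => ∑' n, wordLDeriv α (T n) x) (fun x => ∑' n, wordLDeriv (i :: α) (T n) x) := by
  have hj : (wordWeight (i :: α) : ℝ) < k + σ := by
    have : (wordWeight (i :: α) : ℝ) ≤ k := by exact_mod_cast hα
    linarith
  have hα' : wordWeight α ≤ k := by rw [wordWeight_cons] at hα; omega
  intro x t
  exact hasDerivAt_tsum (u := fun n => B * amp L ((k : ℝ) + σ) n (wordWeight (i :: α)))
    (g := fun n u => wordLDeriv α (T n) (Hmul x (Hexp i u)))
    (g' := fun n u => wordLDeriv (i :: α) (T n) (Hmul x (Hexp i u)))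
    ((amp_summable hL hj).mul_left B)
    (fun n y => smooth_HD α i (h.smooth n) x y)
    (fun n y => h.bound n _ (by omega) _) (y₀ := 0) (h.summable hL hσ0 α hα' _) t

lemma Scaled.word {L σ B : ℝ} {k : ℕ} {T : ℕ → H3 → ℝ} (hL : 1 < L) (hσ0 : 0 < σ)
    (h : Scaled L k σ B T) (α : List (Fin 3)) (hα : wordWeight α ≤ k) :
    wordLDeriv α (fun x => ∑' n, T n x) = fun x => ∑' n, wordLDeriv α (T n) x := by
  induction α with
  | nil => rfl
  | cons i α ih =>
    have hα' : wordWeight α ≤ k := by rw [wordWeight_cons] at hα; omega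
    change lDeriv i (wordLDeriv α _) = _
    rw [ih hα']
    exact (h.hd hL hσ0 α i hα).lDeriv_eq

lemma Scaled.bound_word {L σ B : ℝ} {k : ℕ} {T : ℕ → H3 → ℝ} (hL : 1 < L) (hσ0 : 0 < σ)
    (h : Scaled L k σ B T) (α : List (Fin 3)) (hα : wordWeight α ≤ k) (x : H3) :
    |wordLDeriv α (fun x => ∑' n, T n x) x| ≤
      B * ∑' n, amp L ((k : ℝ) + σ) n k := by
  rw [h.word hL hσ0 α hα]
  have hj : (k : ℝ) < k + σ := by linarith
  refine tsum_of_norm_bounded (f := fun n => wordLDeriv α (T n) x) ((amp_summable hL hj).hasSum.mul_left B) (fun n => ?_)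
  refine (h.bound n α (by omega) x).trans ?_
  refine mul_le_mul_of_nonneg_left ?_ (h.nonneg hL)
  unfold amp
  refine Real.rpow_le_rpow_of_exponent_le (one_le_pow₀ hL.le) ?_
  have : (wordWeight α : ℝ) ≤ k := by exact_mod_cast hα
  linarith

lemma Scaled.diff {L σ B : ℝ} {k : ℕ} {T : ℕ → H3 → ℝ} (hL : 1 < L)
    (h : Scaled L k σ B T) (α : List (Fin 3)) (hα : wordWeight α = k) (n : ℕ) (x z : H3)
    (hd : 0 < Hnorm z) :
    |wordLDeriv α (T n) (Hmul x z) - wordLDeriv α (T n) x| ≤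
      5 * B * Hnorm z ^ σ * min ((L ^ n * Hnorm z) ^ (1 - σ)) ((L ^ n * Hnorm z) ^ (-σ)) := by
  have hB := h.nonneg hL
  have hL0 : 0 < L := by linarith
  set d := Hnorm z with hdd
  have hLn : 0 < L ^ n := by positivity
  have e0 : amp L ((k : ℝ) + σ) n k = d ^ σ * (L ^ n * d) ^ (-σ) := by
    rw [amp, Real.mul_rpow hLn.le hd.le, mul_comm ((L ^ n) ^ (-σ)), ← mul_assoc,
      ← Real.rpow_add hd]
    simp
  have hu : 0 < L ^ n * d := by positivity
  have e1 : amp L ((k : ℝ) + σ) n (k + 1) * d = d ^ σ * (L ^ n * d) ^ (1 - σ) := by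
    rw [← amp_mul hL, e0, sub_eq_add_neg, add_comm 1 (-σ), Real.rpow_add_one hu.ne']; ring
  have e2 : amp L ((k : ℝ) + σ) n (k + 2) * d ^ 2 = d ^ σ * (L ^ n * d) ^ (1 - σ) * (L ^ n * d) := by
    rw [← amp_mul hL, e0, sub_eq_add_neg, add_comm 1 (-σ), Real.rpow_add_one hu.ne']; ring
  have hdσ : 0 < d ^ σ := by positivity
  have hu1 : 0 < (L ^ n * d) ^ (-σ) := by positivity
  have hu2 : 0 < (L ^ n * d) ^ (1 - σ) := by positivity
  have b0 := h.bound n α (by omega)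
  rw [hα, e0] at b0
  have triv : |wordLDeriv α (T n) (Hmul x z) - wordLDeriv α (T n) x| ≤
      2 * (B * (d ^ σ * (L ^ n * d) ^ (-σ))) := by
    have h1 := b0 (Hmul x z)
    have h2 := b0 x
    rw [abs_le] at *
    constructor <;> linarith
  have hpos : 0 ≤ B * (d ^ σ * (L ^ n * d) ^ (-σ)) := by positivity
  rw [show ∀ m, 5 * B * d ^ σ * m = (5 * B * d ^ σ) * m from fun _ => rfl,
    mul_min_of_nonneg _ _ (by positivity), le_min_iff]
  refine ⟨?_, by nlinarith⟩
  rcases le_or_gt (L ^ n * d) 1 with hle | hgt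
  · have w0 : wordWeight ((0 : Fin 3) :: α) = k + 1 := by rw [wordWeight_cons, hα]; simp; ring
    have w1 : wordWeight ((1 : Fin 3) :: α) = k + 1 := by rw [wordWeight_cons, hα]; simp; ring
    have w2 : wordWeight ((2 : Fin 3) :: α) = k + 2 := by rw [wordWeight_cons, hα]; simp; ring
    have c0 := h.bound n (0 :: α) (by omega)
    have c1 := h.bound n (1 :: α) (by omega)
    have c2 := h.bound n (2 :: α) (by omega)
    rw [w0] at c0; rw [w1] at c1; rw [w2] at c2
    have l0 := (smooth_HD α 0 (h.smooth n)).lip c0 x z.1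
    have l1 := (smooth_HD α 1 (h.smooth n)).lip c1 (Hmul x (Hexp 0 z.1)) z.2.1
    have l2 := (smooth_HD α 2 (h.smooth n)).lip c2 (Hmul (Hmul x (Hexp 0 z.1)) (Hexp 1 z.2.1))
      (z.2.2 + 2 * (z.1 * z.2.1))
    rw [← Hmul_factor] at l2
    have a1 := amp_pos hL ((k : ℝ) + σ) n (k + 1)
    have a2 := amp_pos hL ((k : ℝ) + σ) n (k + 2)
    have m0 : B * amp L ((k : ℝ) + σ) n (k + 1) * |z.1| ≤ B * (d ^ σ * (L ^ n * d) ^ (1 - σ)) := by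
      rw [← e1, mul_assoc]
      gcongr
      exact abs_fst_le z
    have m1 : B * amp L ((k : ℝ) + σ) n (k + 1) * |z.2.1| ≤
        B * (d ^ σ * (L ^ n * d) ^ (1 - σ)) := by
      rw [← e1, mul_assoc]
      gcongr
      exact abs_snd_le z
    have m2 : B * amp L ((k : ℝ) + σ) n (k + 2) * |z.2.2 + 2 * (z.1 * z.2.1)| ≤
        3 * (B * (d ^ σ * (L ^ n * d) ^ (1 - σ))) := by
      calc _ ≤ B * amp L ((k : ℝ) + σ) n (k + 2) * (3 * d ^ 2) := by
            gcongr
            exact abs_rho_le z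
        _ = 3 * (B * (amp L ((k : ℝ) + σ) n (k + 2) * d ^ 2)) := by ring
        _ ≤ _ := by
          rw [e2]
          have := mul_le_of_le_one_right (a := d ^ σ * (L ^ n * d) ^ (1 - σ)) (by positivity) hle
          gcongr
    have t1 := abs_sub_le (wordLDeriv α (T n) (Hmul x z))
      (wordLDeriv α (T n) (Hmul (Hmul x (Hexp 0 z.1)) (Hexp 1 z.2.1))) (wordLDeriv α (T n) x)
    have t2 := abs_sub_le (wordLDeriv α (T n) (Hmul (Hmul x (Hexp 0 z.1)) (Hexp 1 z.2.1)))
      (wordLDeriv α (T n) (Hmul x (Hexp 0 z.1))) (wordLDeriv α (T n) x)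
    linarith
  · refine triv.trans ?_
    have : (L ^ n * d) ^ (-σ) ≤ (L ^ n * d) ^ (1 - σ) :=
      Real.rpow_le_rpow_of_exponent_le hgt.le (by linarith)
    have h3 : B * (d ^ σ * (L ^ n * d) ^ (-σ)) ≤ B * (d ^ σ * (L ^ n * d) ^ (1 - σ)) := by gcongr
    have h4 : 0 ≤ B * (d ^ σ * (L ^ n * d) ^ (1 - σ)) := by positivity
    linarith

lemma Scaled.memCs {L σ : ℝ} (k : ℕ) (hL : 1 < L) (hσ0 : 0 < σ) (hσ1 : σ < 1) :
    ∃ K : ℝ, 0 ≤ K ∧ ∀ (B : ℝ) (T : ℕ → H3 → ℝ), Scaled L k σ B T →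
      MemCs k σ (fun x => ∑' n, T n x) ∧ CsNorm k σ (fun x => ∑' n, T n x) ≤ K * B := by
  obtain ⟨C, hC, hpsi⟩ := psi_sum hL hσ0 hσ1
  set S := ∑' n, amp L ((k : ℝ) + σ) n k with hS
  have hS0 : 0 ≤ S := tsum_nonneg fun n => (amp_pos hL _ _ _).le
  refine ⟨(∑ n ∈ Finset.range (k + 1), ∑ v : Fin n → Fin 3, S) + 5 * C, ?_, ?_⟩
  · have : 0 ≤ ∑ n ∈ Finset.range (k + 1), ∑ v : Fin n → Fin 3, S :=
      Finset.sum_nonneg fun _ _ => Finset.sum_nonneg fun _ _ => hS0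
    linarith
  intro B T h
  have hB := h.nonneg hL
  have hold : ∀ α, wordWeight α = k → ∀ x y : H3,
      |wordLDeriv α (fun x => ∑' n, T n x) x - wordLDeriv α (fun x => ∑' n, T n x) y| ≤
        5 * C * B * Hdist x y ^ σ := by
    intro α hα x y
    obtain ⟨z, rfl⟩ : ∃ z, y = Hmul x z := ⟨Hmul (Hinv x) y, (Hmul_Hinv_cancel x y).symm⟩
    rw [Hdist_Hmul_left, h.word hL hσ0 α hα.le, abs_sub_comm]
    rcases (Hnorm_nonneg z).eq_or_lt with h0 | h0
    · have z1 := abs_fst_le z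
      have z2 := abs_snd_le z
      have z3 := abs_trd_le z
      rw [← h0] at z1 z2 z3
      have : z = 0 := by
        refine Prod.ext (abs_nonpos_iff.1 z1) (Prod.ext (abs_nonpos_iff.1 z2) (abs_nonpos_iff.1 ?_))
        simpa using z3
      subst this
      have : Hmul x 0 = x := by simp [Hmul]
      rw [this, ← h0]
      simp [Real.zero_rpow hσ0.ne']
    · obtain ⟨hs, hle⟩ := hpsi _ h0
      rw [← Summable.tsum_sub (h.summable hL hσ0 α hα.le _) (h.summable hL hσ0 α hα.le _)]
      refine (tsum_of_norm_bounded
        (f := fun n => wordLDeriv α (T n) (Hmul x z) - wordLDeriv α (T n) x) (hs.hasSum.mul_left (5 * B * Hnorm z ^ σ))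
        (fun n => h.diff hL α hα n x z h0)).trans ?_
      have : 0 ≤ 5 * B * Hnorm z ^ σ := by positivity
      have := mul_le_mul_of_nonneg_left hle this
      linarith
  refine ⟨⟨fun α i hα x => ?_, fun α hα => ⟨?_, _, h.bound_word hL hσ0 α hα⟩, _, hold⟩, ?_⟩
  · have hα' : wordWeight α ≤ k := by rw [wordWeight_cons] at hα; omega
    rw [h.word hL hσ0 α hα']
    exact (h.hd hL hσ0 α i hα).lineDiff x
  · rw [h.word hL hσ0 α hα]
    have hj : (wordWeight α : ℝ) < k + σ := by
      have : (wordWeight α : ℝ) ≤ k := by exact_mod_cast hα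
      linarith
    exact continuous_tsum (fun n => (smooth_word α (h.smooth n)).continuous)
      ((amp_summable hL hj).mul_left B) (fun n x => h.bound n α (by omega) x)
  · rw [CsNorm, add_mul, Finset.sum_mul]
    simp only [Finset.sum_mul]
    refine add_le_add (Finset.sum_le_sum fun n _ => Finset.sum_le_sum fun v _ => ?_) ?_
    · split_ifs with hv
      · refine Real.sSup_le ?_ (by positivity)
        rintro _ ⟨x, rfl⟩
        rw [mul_comm]
        exact h.bound_word hL hσ0 _ hv x
      · positivity
    · refine Real.sSup_le ?_ (by positivity)
      rintro _ ⟨α, x, y, hα, _, rfl⟩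
      refine div_le_of_le_mul₀ ?_ (by positivity) (hold α hα x y)
      exact Real.rpow_nonneg (Hnorm_nonneg _) _

/-- The `n`-th layer of the construction. -/
def layer (L : ℝ) (k : ℕ) (σ : ℝ) (φ : H3 → ℝ) (e : ℤ × ℤ × ℤ → ℝ) (n : ℕ) (x : H3) : ℝ :=
  amp L ((k : ℝ) + σ) n 0 * Phi φ e (Hdil (L ^ n) x)

lemma layer_scaled {L σ : ℝ} {k : ℕ} (hL : 1 < L) {φ : H3 → ℝ} (hs : ContDiff ℝ ∞ φ)
    (hφ : ∀ x, stepH k ≤ ‖x‖ → φ x = 0) {M : ℝ}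
    (hM : ∀ α, wordWeight α ≤ k + 2 → ∀ x, |wordLDeriv α φ x| ≤ M)
    (e : ℕ → ℤ × ℤ × ℤ → ℝ) {δ : ℝ} (he : ∀ n κ, |e n κ| ≤ δ) :
    Scaled L k σ (δ * M) (fun n => layer L k σ φ (e n) n) := by
  constructor
  · intro n
    have h1 : ContDiff ℝ ∞ (Hdil (L ^ n)) := by
      unfold Hdil; fun_prop
    exact contDiff_const.mul ((Phi_smooth hs hφ (e n)).comp h1)
  · intro n α hα x
    have : layer L k σ φ (e n) n = fun x =>
      amp L ((k : ℝ) + σ) n 0 * Phi φ (e n) (Hdil (L ^ n) x) := rfl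
    simp only [this]
    rw [word_dil, amp_mul hL, zero_add, abs_mul, abs_of_pos (amp_pos hL _ _ _), mul_comm]
    exact mul_le_mul_of_nonneg_right (Phi_bound hφ α M (hM α hα) (e n) δ (he n) _)
      (amp_pos hL _ _ _).le

lemma Hdil_Hdil {l : ℝ} (hl : 0 < l) (x : H3) : Hdil l (Hdil (1 / l) x) = x := by
  rcases x with ⟨a, b, c⟩
  simp only [Hdil, Prod.mk.injEq]
  refine ⟨by field_simp, by field_simp, by field_simp⟩

/-- The base point of scale `l` and index `κ`. -/
def basePt (l : ℝ) (κ : ℤ × ℤ × ℤ) : H3 := Hdil (1 / l) (latticePt κ)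

lemma layer_DX {L σ : ℝ} {k : ℕ} (hL : 1 < L) {φ : H3 → ℝ} (h0 : φ 0 = 1)
    (hφ : ∀ x, stepH k ≤ ‖x‖ → φ x = 0) (e : ℤ × ℤ × ℤ → ℝ) (n : ℕ) (κ : ℤ × ℤ × ℤ) :
    |DX k (stepH k / L ^ n) (layer L k σ φ e n) (basePt (L ^ n) κ)| =
      amp L ((k : ℝ) + σ) n 0 * |e κ| := by
  have hl : 0 < L ^ n := by have : 0 < L := by linarith
                            positivity
  have hs := stepH_pos k
  have hval : ∀ i ∈ Finset.range (k + 1 + 1), layer L k σ φ e n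
      (Hmul (basePt (L ^ n) κ) (Hexp 0 (i * (stepH k / L ^ n)))) =
      amp L ((k : ℝ) + σ) n 0 * (e κ * φ (Hexp 0 (i * stepH k))) := by
    intro i hi
    have hi' : (i : ℝ) ≤ k + 1 := by
      have := Finset.mem_range.1 hi
      exact_mod_cast (by omega : i ≤ k + 1)
    have hrel : rel κ (Hdil (L ^ n) (Hmul (basePt (L ^ n) κ) (Hexp 0 (i * (stepH k / L ^ n))))) =
        Hexp 0 (i * stepH k) := by
      rw [Hdil_mul, basePt, Hdil_Hdil hl, Hdil_exp, rel, Hinv_Hmul_cancel]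
      congr 1
      simp
      field_simp
    rw [layer, Phi_eq hφ e κ _ ?_, hrel]
    rw [hrel, Hexp_zero', Prod.norm_def]
    have : (i : ℝ) * stepH k ≤ 1 / 4 := by
      rw [← stepH_le k, mul_comm]
      exact mul_le_mul_of_nonneg_left hi' hs.le
    have h2 : 0 ≤ (i : ℝ) * stepH k := by positivity
    simp only [Real.norm_eq_abs, abs_of_nonneg h2, sup_lt_iff]
    exact ⟨by linarith, by simp⟩
  rw [DX, Finset.sum_congr rfl fun i hi => by rw [hval i hi]]
  rw [Finset.sum_eq_single 0]
  · have : Hexp 0 (((0 : ℕ) : ℝ) * stepH k) = 0 := by simp [Hexp_zero']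
    rw [this, h0]
    simp only [abs_mul, abs_pow, abs_neg, abs_one, one_pow, Nat.choose_zero_right, Nat.cast_one,
      one_mul, mul_one, abs_of_pos (amp_pos hL _ _ _)]
  · intro i _ hi
    have hi1 : (1 : ℝ) ≤ i := by exact_mod_cast Nat.one_le_iff_ne_zero.2 hi
    rw [hφ (Hexp 0 (i * stepH k)), mul_zero, mul_zero, mul_zero]
    rw [Hexp_zero']
    refine le_trans ?_ (norm_fst_le _)
    rw [Real.norm_eq_abs, abs_of_nonneg (by positivity)]
    nlinarith
  · intro h; simp at h

/-- The greedy choice of coefficients. -/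
def greedy (L : ℝ) (k : ℕ) (σ δ : ℝ) (n : ℕ) (g : H3 → ℝ) (κ : ℤ × ℤ × ℤ) : ℝ :=
  if δ * amp L ((k : ℝ) + σ) n 0 / 2 ≤ |DX k (stepH k / L ^ n) g (basePt (L ^ n) κ)| then 0 else δ

/-- The successive corrections of `f`. -/
def gseq (L : ℝ) (k : ℕ) (σ δ : ℝ) (φ f : H3 → ℝ) : ℕ → H3 → ℝ
  | 0 => f
  | n + 1 => fun x => gseq L k σ δ φ f n x -
      layer L k σ φ (greedy L k σ δ n (gseq L k σ δ φ f n)) n x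

lemma greedy_abs (L : ℝ) (k : ℕ) (σ : ℝ) {δ : ℝ} (hδ : 0 ≤ δ) (n : ℕ) (g : H3 → ℝ)
    (κ : ℤ × ℤ × ℤ) : |greedy L k σ δ n g κ| ≤ δ := by
  unfold greedy
  split_ifs
  · simpa using hδ
  · rw [abs_of_nonneg hδ]

lemma gseq_succ_DX {L σ : ℝ} {k : ℕ} (hL : 1 < L) {φ : H3 → ℝ} (h0 : φ 0 = 1)
    (hφ : ∀ x, stepH k ≤ ‖x‖ → φ x = 0) {δ : ℝ} (hδ : 0 ≤ δ) (f : H3 → ℝ) (n : ℕ)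
    (κ : ℤ × ℤ × ℤ) :
    δ * amp L ((k : ℝ) + σ) n 0 / 2 ≤
      |DX k (stepH k / L ^ n) (gseq L k σ δ φ f (n + 1)) (basePt (L ^ n) κ)| := by
  have h := layer_DX (σ := σ) hL h0 hφ (greedy L k σ δ n (gseq L k σ δ φ f n)) n κ
  rw [gseq, DX_sub]
  set a := DX k (stepH k / L ^ n) (gseq L k σ δ φ f n) (basePt (L ^ n) κ) with ha
  set b := DX k (stepH k / L ^ n) (layer L k σ φ (greedy L k σ δ n (gseq L k σ δ φ f n)) n)
    (basePt (L ^ n) κ) with hb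
  by_cases hc : δ * amp L ((k : ℝ) + σ) n 0 / 2 ≤ |a|
  · have : greedy L k σ δ n (gseq L k σ δ φ f n) κ = 0 := by
      unfold greedy; exact if_pos hc
    rw [this, abs_zero, mul_zero, abs_eq_zero] at h
    rw [h, sub_zero]; exact hc
  · have : greedy L k σ δ n (gseq L k σ δ φ f n) κ = δ := by
      unfold greedy; exact if_neg hc
    rw [this, abs_of_nonneg hδ] at h
    have h2 := abs_sub_abs_le_abs_sub b a
    rw [abs_sub_comm] at h2
    push Not at hc
    linarith

lemma gseq_sum (L : ℝ) (k : ℕ) (σ δ : ℝ) (φ f : H3 → ℝ) (n : ℕ) (x : H3) :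
    gseq L k σ δ φ f n x = f x - ∑ m ∈ Finset.range n,
      layer L k σ φ (greedy L k σ δ m (gseq L k σ δ φ f m)) m x := by
  induction n with
  | zero => simp [gseq]
  | succ n ih => rw [Finset.sum_range_succ, gseq]; simp only [ih]; ring

lemma layer_abs {L σ : ℝ} {k : ℕ} (hL : 1 < L) {φ : H3 → ℝ} (h1 : ∀ x, |φ x| ≤ 1)
    {e : ℤ × ℤ × ℤ → ℝ} {δ : ℝ} (he : ∀ κ, |e κ| ≤ δ) (n : ℕ) (x : H3) :
    |layer L k σ φ e n x| ≤ δ * amp L ((k : ℝ) + σ) n 0 := by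
  rw [layer, Phi, abs_mul, abs_mul, abs_of_pos (amp_pos hL _ _ _), mul_comm]
  refine mul_le_mul_of_nonneg_right ?_ (amp_pos hL _ _ _).le
  calc _ ≤ δ * 1 := mul_le_mul (he _) (h1 _) (abs_nonneg _) ((abs_nonneg _).trans (he (0,0,0)))
    _ = δ := mul_one _

lemma tail_abs {L σ : ℝ} {k : ℕ} (hL : 1 < L)
    (hLs : L ^ (-((k : ℝ) + σ)) ≤ 1 / 2 ^ (k + 4)) {φ : H3 → ℝ} (h1 : ∀ x, |φ x| ≤ 1)
    {e : ℕ → ℤ × ℤ × ℤ → ℝ} {δ : ℝ} (he : ∀ n κ, |e n κ| ≤ δ) (n : ℕ) (x : H3) :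
    |∑' m, layer L k σ φ (e (m + (n + 1))) (m + (n + 1)) x| ≤
      δ * amp L ((k : ℝ) + σ) n 0 / 2 ^ (k + 3) := by
  have hδ : 0 ≤ δ := (abs_nonneg _).trans (he 0 (0, 0, 0))
  have hL0 : 0 < L := by linarith
  set q := L ^ (-((k : ℝ) + σ)) with hq
  have hq0 : 0 < q := by positivity
  have hamp : ∀ m, amp L ((k : ℝ) + σ) m 0 = q ^ m := by
    intro m; rw [amp_eq hL]; simp [hq]
  have hq2 : (1 : ℝ) / 2 ^ (k + 4) ≤ 1 / 2 := by
    apply one_div_le_one_div_of_le (by norm_num)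
    calc (2 : ℝ) = 2 ^ 1 := by norm_num
      _ ≤ 2 ^ (k + 4) := pow_le_pow_right₀ (by norm_num) (by omega)
  have hg := (hasSum_geometric_of_lt_one hq0.le (by linarith)).mul_left (δ * q ^ n * q)
  refine (tsum_of_norm_bounded (f := fun m => layer L k σ φ (e (m + (n + 1))) (m + (n + 1)) x)
    hg (fun m => ?_)).trans ?_
  · refine (layer_abs hL h1 (he _) _ x).trans_eq ?_
    rw [hamp]; ring
  · have hinv : (1 - q)⁻¹ ≤ 2 := by
      rw [inv_le_comm₀ (by linarith) (by norm_num)]; linarith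
    rw [hamp]
    calc δ * q ^ n * q * (1 - q)⁻¹ ≤ δ * q ^ n * (1 / 2 ^ (k + 4)) * 2 := by
          have : 0 < (1 - q)⁻¹ := inv_pos.2 (by linarith)
          gcongr
      _ = _ := by rw [pow_succ' 2 (k + 3)]; field_simp

lemma basePt_near {l : ℝ} (hl : 0 < l) (x₀ : H3) :
    ∃ z, Hmul x₀ z = basePt l (kap (Hdil l x₀)) ∧ Hnorm z ≤ 1 / l := by
  set κ := kap (Hdil l x₀) with hκ
  have hk := rel_kap (Hdil l x₀)
  rw [← hκ] at hk
  set v := rel κ (Hdil l x₀) with hv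
  refine ⟨Hmul (Hinv x₀) (basePt l κ), Hmul_Hinv_cancel _ _, ?_⟩
  have e : Hmul (Hinv x₀) (basePt l κ) = (-v.1 / l, -v.2.1 / l, -v.2.2 / l ^ 2) := by
    rw [hv, rel_def]
    simp only [Hmul, Hinv, basePt, Hdil, latticePt, Prod.mk.injEq]
    refine ⟨by field_simp; ring, by field_simp; ring, by field_simp; ring⟩
  have n1 : |v.1| ≤ 1 / 2 := (norm_fst_le v).trans hk
  have n2 : |v.2.1| ≤ 1 / 2 := (norm_fst_le v.2).trans ((norm_snd_le v).trans hk)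
  have n3 : |v.2.2| ≤ 1 / 2 := (norm_snd_le v.2).trans ((norm_snd_le v).trans hk)
  apply Hnorm_le (by positivity)
  rw [e]
  have s1 : v.1 ^ 2 ≤ 1 / 4 := by rw [← sq_abs]; nlinarith [abs_nonneg v.1]
  have s2 : v.2.1 ^ 2 ≤ 1 / 4 := by rw [← sq_abs]; nlinarith [abs_nonneg v.2.1]
  have s3 : v.2.2 ^ 2 ≤ 1 / 4 := by rw [← sq_abs]; nlinarith [abs_nonneg v.2.2]
  have e2 : ((-v.1 / l) ^ 2 + (-v.2.1 / l) ^ 2) ^ 2 + (-v.2.2 / l ^ 2) ^ 2 =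
      ((v.1 ^ 2 + v.2.1 ^ 2) ^ 2 + v.2.2 ^ 2) * (1 / l) ^ 4 := by field_simp
  simp only [e2]
  have : (v.1 ^ 2 + v.2.1 ^ 2) ^ 2 + v.2.2 ^ 2 ≤ 1 := by
    nlinarith [sq_nonneg v.1, sq_nonneg v.2.1]
  calc _ ≤ 1 * (1 / l) ^ 4 := by gcongr
    _ = _ := one_mul _

lemma Rset_dense {k : ℕ} {σ : ℝ} (hσ0 : 0 < σ) (hσ1 : σ < 1) {f : H3 → ℝ} (hf : MemCs k σ f)
    {ε : ℝ} (hε : 0 < ε) : ∃ g ∈ Rset k σ, CsNorm k σ (fun x => f x - g x) < ε := by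
  have hs0 : 0 < (k : ℝ) + σ := by positivity
  obtain ⟨L, hL, hLs⟩ : ∃ L : ℝ, 1 < L ∧ L ^ (-((k : ℝ) + σ)) ≤ 1 / 2 ^ (k + 4) := by
    refine ⟨((2 : ℝ) ^ (k + 4)) ^ (1 / ((k : ℝ) + σ)), ?_, ?_⟩
    · apply Real.one_lt_rpow (one_lt_pow₀ (by norm_num) (by omega)) (by positivity)
    · rw [← Real.rpow_mul (by positivity)]
      have : 1 / ((k : ℝ) + σ) * -((k : ℝ) + σ) = -1 := by field_simp
      rw [this, Real.rpow_neg_one, one_div]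
  have hL0 : 0 < L := by linarith
  obtain ⟨φ, hsm, hcs, h1, h0, hφ⟩ := exists_bump k
  obtain ⟨M, hM0, hM⟩ := word_bounded_unif (k + 2) hsm hcs
  obtain ⟨K, hK0, hK⟩ := Scaled.memCs (L := L) k hL hσ0 hσ1
  obtain ⟨δ, hδ, hδε⟩ : ∃ δ : ℝ, 0 < δ ∧ K * (δ * M) < ε := by
    refine ⟨ε / (K * M + 1), by positivity, ?_⟩
    rw [show K * (ε / (K * M + 1) * M) = ε * (K * M / (K * M + 1)) by ring]
    have : K * M / (K * M + 1) < 1 := by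
      rw [div_lt_one (by positivity)]; linarith
    nlinarith
  set e : ℕ → ℤ × ℤ × ℤ → ℝ := fun n => greedy L k σ δ n (gseq L k σ δ φ f n) with he
  have heδ : ∀ n κ, |e n κ| ≤ δ := fun n κ => greedy_abs L k σ hδ.le n _ κ
  have hsc := layer_scaled (σ := σ) hL hsm hφ hM e heδ
  obtain ⟨hGm, hGn⟩ := hK _ _ hsc
  set G : H3 → ℝ := fun x => ∑' n, layer L k σ φ (e n) n x with hG
  refine ⟨fun x => f x - G x, ⟨hf.sub hGm, ?_⟩, ?_⟩
  swap
  · have : (fun x => f x - (f x - G x)) = G := by funext x; ring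
    rw [this]; linarith
  have key : ∀ n κ, δ * amp L ((k : ℝ) + σ) n 0 / 4 ≤
      |DX k (stepH k / L ^ n) (fun x => f x - G x) (basePt (L ^ n) κ)| := by
    intro n κ
    set t : H3 → ℝ := fun x => ∑' m, layer L k σ φ (e (m + (n + 1))) (m + (n + 1)) x with ht
    have hdec : (fun x => f x - G x) = fun x => gseq L k σ δ φ f (n + 1) x - t x := by
      funext x
      have hsum : Summable (fun m => layer L k σ φ (e m) m x) :=
        hsc.summable hL hσ0 [] (by simp [wordWeight]) x
      have := hsum.sum_add_tsum_nat_add (n + 1)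
      rw [gseq_sum]
      simp only [hG, ht]
      rw [← this]
      simp only [he]
      ring
    rw [hdec, DX_sub]
    have a1 := gseq_succ_DX (σ := σ) hL h0 hφ hδ.le f n κ
    have a2 := DX_bound k (stepH k / L ^ n) t (basePt (L ^ n) κ) _
      (fun i _ => tail_abs hL hLs h1 heδ n _)
    have a3 : 2 ^ (k + 1) * (δ * amp L ((k : ℝ) + σ) n 0 / 2 ^ (k + 3)) =
        δ * amp L ((k : ℝ) + σ) n 0 / 4 := by
      rw [pow_add 2 k 3, pow_add 2 k 1]; field_simp; norm_num; ring
    rw [a3] at a2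
    have a4 := abs_sub_abs_le_abs_sub
      (DX k (stepH k / L ^ n) (gseq L k σ δ φ f (n + 1)) (basePt (L ^ n) κ))
      (DX k (stepH k / L ^ n) t (basePt (L ^ n) κ))
    linarith
  have hh := stepH_pos k
  refine ⟨δ / 4 * (stepH k) ^ (-((k : ℝ) + σ)), by positivity, 1 / stepH k, by positivity, ?_⟩
  intro x₀ η hη
  obtain ⟨n, hn⟩ := pow_unbounded_of_one_lt (stepH k / η) hL
  have hl : 0 < L ^ n := by positivity
  obtain ⟨z, hz, hzn⟩ := basePt_near hl x₀
  refine ⟨stepH k / L ^ n, by positivity, ?_, z, ?_, ?_⟩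
  · rw [div_lt_iff₀ hη] at hn
    rw [div_lt_iff₀ hl]; linarith
  · refine hzn.trans_eq ?_
    field_simp
  · rw [hz]
    refine le_trans (le_of_eq ?_) (key n _)
    rw [Real.div_rpow hh.le hl.le, amp, Real.rpow_neg hh.le]
    have : (((0 : ℕ) : ℝ) - ((k : ℝ) + σ)) = -((k : ℝ) + σ) := by simp
    rw [this, Real.rpow_neg hl.le]
    have p1 : 0 < stepH k ^ ((k : ℝ) + σ) := by positivity
    have p2 : 0 < (L ^ n) ^ ((k : ℝ) + σ) := by positivity
    field_simp

end Aux

/-- For `s = k + σ ∉ ℕ` (with `k ∈ ℕ`, `σ ∈ (0,1)`), there is a dense open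
(hence generic) subset `R` of the Banach space `C^s(ℍ)` such that every `f ∈ R` has pointwise
Hölder exponent exactly `s` at every point: generic functions of `C^s(ℍ)` are monofractal. -/
theorem generic_monofractality_in_Cs (s σ : ℝ) (k : ℕ)
    (hσ0 : 0 < σ) (hσ1 : σ < 1) (hs : s = k + σ) :
    ∃ R : Set (H3 → ℝ),
      (∀ f ∈ R, MemCs k σ f) ∧
      (∀ f ∈ R, ∃ ε : ℝ, 0 < ε ∧ ∀ g : H3 → ℝ, MemCs k σ g →
          CsNorm k σ (fun x => f x - g x) < ε → g ∈ R) ∧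
      (∀ f : H3 → ℝ, MemCs k σ f → ∀ ε : ℝ, 0 < ε →
          ∃ g ∈ R, CsNorm k σ (fun x => f x - g x) < ε) ∧
      (∀ f ∈ R, ∀ x₀ : H3, holderExponent f x₀ = s) := by
  subst hs
  exact ⟨Rset k σ, fun f hf => hf.1, fun f hf => Rset_open hf,
    fun f hf ε hε => Rset_dense hσ0 hσ1 hf hε, fun f hf x₀ => Rset_exponent hσ0 hσ1 hf x₀⟩
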